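/- There is an absolute constant C such that the following holds: for every integer d ≥ 2, every real X ≥ 2, with V := (dX)², and every real t with |t| ≤ X², one has Σ*_{χ mod d} |∫_{−V}^{V} L(3/2 + it + iu, χ) · X^{1+iu}/(1+iu) · i du|⁴ ≤ C · d · (1+|t|) · (log(dX))⁸, where the integral is the integral of L(s + 1/2 + it, χ)·X^s/s over the vertical segment from s = 1 − iV to s = 1 + iV. -/

import Mathlib

open MeasureTheory Real Complex

/-- The sum of `f` over all primitive Dirichlet characters modulo `d`
(a finite sum, since there are finitely many Dirichlet characters modulo `d`). -/
noncomputable def sumPrimitive (d : ℕ) (f : DirichletCharacter ℂ d → ℝ) : ℝ :=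
  ∑ᶠ χ ∈ {χ : DirichletCharacter ℂ d | χ.IsPrimitive}, f χ

lemma fm_divisors_card_mul_le (a b : ℕ) :
    (Nat.divisors (a * b)).card ≤ (Nat.divisors a).card * (Nat.divisors b).card := by
  rw [Nat.divisors_mul]
  exact Finset.card_mul_le

lemma fm_harm_le (N : ℕ) : ∑ n ∈ Finset.Icc 1 N, (1 : ℝ) / n ≤ 1 + Real.log N := by
  have := harmonic_le_one_add_log N
  rw [harmonic_eq_sum_Icc] at this
  push_cast at this
  simpa [one_div] using this

lemma fm_divisor_sum (N : ℕ) :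
    ∑ n ∈ Finset.Icc 1 N, ((Nat.divisors n).card : ℝ) / n ≤ (1 + Real.log N) ^ 2 := by
  have h0 : (0:ℝ) ≤ ∑ n ∈ Finset.Icc 1 N, (1 : ℝ) / n := Finset.sum_nonneg (by intros; positivity)
  calc ∑ n ∈ Finset.Icc 1 N, ((Nat.divisors n).card : ℝ) / n
      = ∑ n ∈ Finset.Icc 1 N, ∑ p ∈ Nat.divisorsAntidiagonal n, (1 : ℝ) / p.1 * (1 / p.2) := by
        refine Finset.sum_congr rfl fun n hn => ?_
        rw [← Nat.map_div_right_divisors]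
        rw [Finset.sum_map]
        rw [Finset.card_eq_sum_ones]
        push_cast
        rw [Finset.sum_div]
        refine Finset.sum_congr rfl fun k hk => ?_
        have hk' := Nat.dvd_of_mem_divisors hk
        have hn0 : (n:ℝ) ≠ 0 := by
          have := (Finset.mem_Icc.mp hn).1
          positivity
        have hk0 : (k:ℝ) ≠ 0 := by
          have := Nat.pos_of_mem_divisors hk
          positivity
        change _ = 1 / (k : ℝ) * (1 / ((n / k : ℕ) : ℝ))
        rw [Nat.cast_div hk' hk0]
        field_simp
    _ = ∑ x ∈ (Finset.Icc 1 N).sigma (fun n => Nat.divisorsAntidiagonal n),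
          (1 : ℝ) / x.2.1 * (1 / x.2.2) := by
        rw [Finset.sum_sigma]
    _ ≤ ∑ p ∈ Finset.Icc 1 N ×ˢ Finset.Icc 1 N, (1 : ℝ) / p.1 * (1 / p.2) := by
        rw [← Finset.sum_image (s := (Finset.Icc 1 N).sigma (fun n => Nat.divisorsAntidiagonal n))
          (g := fun x => x.2) (f := fun p : ℕ × ℕ => (1 : ℝ) / p.1 * (1 / p.2))]
        · refine Finset.sum_le_sum_of_subset_of_nonneg ?_ (by intros; positivity)
          intro p hp
          simp only [Finset.mem_image, Finset.mem_sigma, Nat.mem_divisorsAntidiagonal,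
            Finset.mem_Icc] at hp
          obtain ⟨⟨n, q⟩, ⟨hn, hq⟩, rfl⟩ := hp
          simp only at hn hq ⊢
          have h1 : 0 < q.1 := Nat.pos_of_ne_zero (by rintro h; simp [h] at hq; omega)
          have h2 : 0 < q.2 := Nat.pos_of_ne_zero (by rintro h; simp [h] at hq; omega)
          simp only [Finset.mem_product, Finset.mem_Icc]
          have := Nat.le_mul_of_pos_right q.1 h2
          have := Nat.le_mul_of_pos_left q.2 h1
          omega
        · rintro ⟨n, q⟩ h1 ⟨m, q'⟩ h2 h
          simp only at h
          subst h
          simp at h1 h2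
          obtain ⟨_, h1, _⟩ := h1
          obtain ⟨_, h2, _⟩ := h2
          have : n = m := by omega
          subst this; rfl
    _ = (∑ n ∈ Finset.Icc 1 N, (1 : ℝ) / n) ^ 2 := by
        rw [Finset.sum_product, sq, Finset.sum_mul_sum]
    _ ≤ _ := by
        gcongr
        exact fm_harm_le N

/-- orthogonality -/
lemma fm_orth (d : ℕ) [NeZero d] (b : ZMod d → ℂ) :
    ∑ χ : DirichletCharacter ℂ d, ‖∑ r, b r * χ r‖ ^ 2 ≤ d * ∑ r, ‖b r‖ ^ 2 := by
  have key : ∑ χ : DirichletCharacter ℂ d, ‖∑ r, b r * χ r‖ ^ 2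
      = d.totient * ∑ r ∈ Finset.univ.filter (fun r : ZMod d => IsUnit r), ‖b r‖ ^ 2 := by
    have : ((∑ χ : DirichletCharacter ℂ d, ‖∑ r, b r * χ r‖ ^ 2 : ℝ) : ℂ)
      = ((d.totient * ∑ r ∈ Finset.univ.filter (fun r : ZMod d => IsUnit r), ‖b r‖ ^ 2 : ℝ) : ℂ) := by
      push_cast
      have h1 : ∀ χ : DirichletCharacter ℂ d, ((‖∑ r, b r * χ r‖ : ℂ)) ^ 2
          = ∑ r, ∑ s, (b s * starRingEnd ℂ (b r)) * (χ⁻¹ r * χ s) := by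
        intro χ
        rw [← Complex.conj_mul', map_sum, Finset.sum_mul_sum]
        refine Finset.sum_congr rfl fun r _ => Finset.sum_congr rfl fun s _ => ?_
        rw [map_mul, ← MulChar.star_apply' χ r]
        simp only [starRingEnd_apply]
        ring
      simp_rw [h1]
      rw [Finset.sum_comm]
      rw [Finset.mul_sum, Finset.sum_filter]
      refine Finset.sum_congr rfl fun r _ => ?_
      rw [Finset.sum_comm]
      simp_rw [← Finset.mul_sum]
      split_ifs with hr
      · have h2 : ∀ s : ZMod d, ∑ χ : DirichletCharacter ℂ d, (χ⁻¹ r * χ s)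
            = if r = s then (d.totient : ℂ) else 0 := by
          intro s
          rw [← DirichletCharacter.sum_char_inv_mul_char_eq ℂ hr s]
          refine Finset.sum_congr rfl fun χ _ => ?_
          obtain ⟨u, rfl⟩ := hr
          rw [MulChar.inv_apply, Ring.inverse_unit, ZMod.inv_coe_unit]
        simp_rw [h2]
        simp
        rw [← Complex.conj_mul']
        ring
      · refine Finset.sum_eq_zero fun s _ => ?_
        have : ∀ χ : DirichletCharacter ℂ d, χ⁻¹ r = 0 := fun χ => MulChar.map_nonunit _ hr
        simp [this]
    exact_mod_cast this
  rw [key]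
  have h1 : (d.totient : ℝ) ≤ d := by exact_mod_cast Nat.totient_le d
  have h2 : ∑ r ∈ Finset.univ.filter (fun r : ZMod d => IsUnit r), ‖b r‖ ^ 2 ≤ ∑ r, ‖b r‖ ^ 2 :=
    Finset.sum_le_sum_of_subset_of_nonneg (Finset.filter_subset _ _) (by intros; positivity)
  gcongr


lemma fm_residue_sum (d : ℕ) [NeZero d] (N : ℕ) (r : ZMod d) :
    ∑ n ∈ (Finset.Icc 1 N).filter (fun n : ℕ => (n : ZMod d) = r), (d : ℝ) / (d + n)
      ≤ 1 + Real.log (N + 1) := by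
  have hd : 0 < d := Nat.pos_of_ne_zero (NeZero.ne d)
  have hd' : (0:ℝ) < d := by exact_mod_cast hd
  have hinj : Set.InjOn (fun n : ℕ => n / d + 1)
      ((Finset.Icc 1 N).filter (fun n : ℕ => (n : ZMod d) = r) : Finset ℕ) := by
    intro a ha b hb hab
    simp only [Finset.coe_filter, Set.mem_ofPred_eq] at ha hb
    have h1 : a % d = b % d := by
      have : (a : ZMod d) = (b : ZMod d) := by rw [ha.2, hb.2]
      exact (ZMod.natCast_eq_natCast_iff' a b d).mp this
    have h2 : a / d = b / d := by simpa using hab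
    rw [← Nat.div_add_mod a d, ← Nat.div_add_mod b d, h1, h2]
  calc ∑ n ∈ (Finset.Icc 1 N).filter (fun n : ℕ => (n : ZMod d) = r), (d : ℝ) / (d + n)
      ≤ ∑ n ∈ (Finset.Icc 1 N).filter (fun n : ℕ => (n : ZMod d) = r),
          (1 : ℝ) / ((n / d + 1 : ℕ) : ℝ) := by
        refine Finset.sum_le_sum fun n _ => ?_
        rw [div_le_div_iff₀ (by positivity) (by positivity)]
        have : ((n / d : ℕ) : ℝ) * d ≤ n := by exact_mod_cast Nat.div_mul_le_self n d
        push_cast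
        linarith
    _ = ∑ k ∈ ((Finset.Icc 1 N).filter (fun n : ℕ => (n : ZMod d) = r)).image
          (fun n => n / d + 1), (1 : ℝ) / (k : ℝ) := by
        rw [Finset.sum_image hinj]
    _ ≤ ∑ k ∈ Finset.Icc 1 (N + 1), (1 : ℝ) / (k : ℝ) := by
        refine Finset.sum_le_sum_of_subset_of_nonneg ?_ (by intros; positivity)
        intro k hk
        simp only [Finset.mem_image, Finset.mem_filter, Finset.mem_Icc] at hk ⊢
        obtain ⟨n, ⟨hn, _⟩, rfl⟩ := hk
        exact ⟨Nat.succ_pos _, Nat.succ_le_succ ((Nat.div_le_self n d).trans hn.2)⟩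
    _ ≤ _ := by
        have := fm_harm_le (N + 1)
        push_cast at this
        exact_mod_cast this

lemma fm_ls2 (d : ℕ) [NeZero d] (N : ℕ) (a : ℕ → ℂ) :
    ∑ χ : DirichletCharacter ℂ d, ‖∑ n ∈ Finset.Icc 1 N, a n * χ n‖ ^ 2
      ≤ (1 + Real.log (N + 1)) * ∑ n ∈ Finset.Icc 1 N, (d + n : ℝ) * ‖a n‖ ^ 2 := by
  have hd : 0 < d := Nat.pos_of_ne_zero (NeZero.ne d)
  have hd' : (0:ℝ) < d := by exact_mod_cast hd
  set b : ZMod d → ℂ := fun r => ∑ n ∈ (Finset.Icc 1 N).filter (fun n : ℕ => (n : ZMod d) = r), a n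
    with hb
  have h1 : ∀ χ : DirichletCharacter ℂ d, ∑ n ∈ Finset.Icc 1 N, a n * χ n = ∑ r, b r * χ r := by
    intro χ
    rw [← Finset.sum_fiberwise_of_maps_to (s := Finset.Icc 1 N) (t := Finset.univ)
      (g := fun n : ℕ => (n : ZMod d)) (by simp)]
    refine Finset.sum_congr rfl fun r _ => ?_
    rw [hb, Finset.sum_mul]
    refine Finset.sum_congr rfl fun n hn => ?_
    rw [(Finset.mem_filter.mp hn).2]
  simp_rw [h1]
  refine (fm_orth d b).trans ?_
  have h2 : ∀ r, d * ‖b r‖ ^ 2 ≤ (1 + Real.log (N + 1)) *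
      ∑ n ∈ (Finset.Icc 1 N).filter (fun n : ℕ => (n : ZMod d) = r), (d + n : ℝ) * ‖a n‖ ^ 2 := by
    intro r
    have h3 : ‖b r‖ ≤ ∑ n ∈ (Finset.Icc 1 N).filter (fun n : ℕ => (n : ZMod d) = r), ‖a n‖ :=
      norm_sum_le _ _
    have h4 := Finset.sum_sq_le_sum_mul_sum_of_sq_le_mul
      ((Finset.Icc 1 N).filter (fun n : ℕ => (n : ZMod d) = r))
      (r := fun n => ‖a n‖) (f := fun n => (d : ℝ) / (d + n))
      (g := fun n => (d + n : ℝ) * ‖a n‖ ^ 2 / d)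
      (by intros; positivity) (by intros; positivity)
      (by intro n _; apply le_of_eq; field_simp)
    have h5 : ‖b r‖ ^ 2 ≤ _ := (pow_le_pow_left₀ (norm_nonneg _) h3 2).trans h4
    have h6 := fm_residue_sum d N r
    have h7 : 0 ≤ ∑ n ∈ (Finset.Icc 1 N).filter (fun n : ℕ => (n : ZMod d) = r),
      (d + n : ℝ) * ‖a n‖ ^ 2 / d := Finset.sum_nonneg (by intros; positivity)
    have h8 := h5.trans (mul_le_mul_of_nonneg_right h6 h7)
    rw [← Finset.sum_div] at h8
    calc d * ‖b r‖ ^ 2 ≤ d * _ := mul_le_mul_of_nonneg_left h8 hd'.le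
      _ = _ := by field_simp
  rw [Finset.mul_sum]
  refine (Finset.sum_le_sum fun r _ => h2 r).trans ?_
  rw [← Finset.mul_sum]
  rw [Finset.sum_fiberwise_of_maps_to (s := Finset.Icc 1 N) (t := Finset.univ)
      (g := fun n : ℕ => (n : ZMod d)) (by simp)]

lemma fm_ls4 (d : ℕ) [NeZero d] (N : ℕ) (c : ℕ → ℂ) :
    ∑ χ : DirichletCharacter ℂ d, ‖∑ n ∈ Finset.Icc 1 N, c n * χ n‖ ^ 4
      ≤ (1 + Real.log ((N * N : ℕ) + 1)) *
        (d * (∑ n ∈ Finset.Icc 1 N, (Nat.divisors n).card * ‖c n‖ ^ 2) ^ 2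
          + (∑ n ∈ Finset.Icc 1 N, n * ((Nat.divisors n).card * ‖c n‖ ^ 2)) ^ 2) := by
  have hlog : 0 ≤ 1 + Real.log ((N * N : ℕ) + 1) := by
    have : 0 ≤ Real.log ((N * N : ℕ) + 1) := Real.log_nonneg (by
      have : (0:ℝ) ≤ (N * N : ℕ) := by positivity
      linarith)
    linarith
  set P := Finset.Icc 1 N ×ˢ Finset.Icc 1 N with hP
  set A : ℕ → ℂ := fun n => ∑ p ∈ P.filter (fun p => p.1 * p.2 = n), c p.1 * c p.2 with hA
  have hmaps : ∀ p ∈ P, p.1 * p.2 ∈ Finset.Icc 1 (N * N) := by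
    intro p hp
    simp only [hP, Finset.mem_product, Finset.mem_Icc] at hp ⊢
    exact ⟨Nat.mul_pos hp.1.1 hp.2.1, Nat.mul_le_mul hp.1.2 hp.2.2⟩
  have h1 : ∀ χ : DirichletCharacter ℂ d, ‖∑ n ∈ Finset.Icc 1 N, c n * χ n‖ ^ 4
      = ‖∑ n ∈ Finset.Icc 1 (N * N), A n * χ n‖ ^ 2 := by
    intro χ
    have : ∑ n ∈ Finset.Icc 1 (N * N), A n * χ n = (∑ n ∈ Finset.Icc 1 N, c n * χ n) ^ 2 := by
      rw [sq, Finset.sum_mul_sum, ← Finset.sum_product',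
        ← Finset.sum_fiberwise_of_maps_to (g := fun p : ℕ × ℕ => p.1 * p.2) hmaps]
      refine Finset.sum_congr rfl fun n _ => ?_
      rw [hA, Finset.sum_mul]
      refine Finset.sum_congr rfl fun p hp => ?_
      rw [← (Finset.mem_filter.mp hp).2]
      push_cast
      rw [map_mul]
      ring
    rw [this, norm_pow]
    ring
  simp_rw [h1]
  refine (fm_ls2 d (N * N) A).trans ?_
  refine mul_le_mul_of_nonneg_left ?_ hlog
  set D : ℕ → ℝ := fun n => ((Nat.divisors n).card : ℝ) * ‖c n‖ ^ 2 with hD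
  have hD0 : ∀ n, 0 ≤ D n := fun n => by positivity
  have h2 : ∀ n ∈ Finset.Icc 1 (N * N), ‖A n‖ ^ 2 ≤
      ∑ p ∈ P.filter (fun p => p.1 * p.2 = n), D p.1 * D p.2 := by
    intro n hn
    have hn0 : n ≠ 0 := by have := (Finset.mem_Icc.mp hn).1; omega
    have h3 : ‖A n‖ ≤ ∑ p ∈ P.filter (fun p => p.1 * p.2 = n), ‖c p.1‖ * ‖c p.2‖ := by
      refine (norm_sum_le _ _).trans (le_of_eq ?_)
      simp
    have h4 : ‖A n‖ ^ 2 ≤ _ := (pow_le_pow_left₀ (norm_nonneg _) h3 2).trans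
      (sq_sum_le_card_mul_sum_sq)
    refine h4.trans ?_
    have h5 : (P.filter (fun p => p.1 * p.2 = n)).card ≤ (Nat.divisors n).card := by
      have h7 : (Nat.divisors n).card = (Nat.divisorsAntidiagonal n).card := by
        rw [← Nat.map_div_right_divisors, Finset.card_map]
      rw [h7]
      apply Finset.card_le_card
      intro p hp
      simp only [Finset.mem_filter] at hp
      simp [hp.2, hn0]
    rw [Finset.mul_sum]
    refine Finset.sum_le_sum fun p hp => ?_
    have hpn := (Finset.mem_filter.mp hp).2
    have h6 : ((P.filter (fun p => p.1 * p.2 = n)).card : ℝ) ≤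
        (Nat.divisors p.1).card * (Nat.divisors p.2).card := by
      have := h5.trans (hpn ▸ fm_divisors_card_mul_le p.1 p.2)
      exact_mod_cast this
    calc _ ≤ ((Nat.divisors p.1).card * (Nat.divisors p.2).card : ℝ) * (‖c p.1‖ * ‖c p.2‖) ^ 2 := by
          gcongr
      _ = D p.1 * D p.2 := by simp only [hD]; ring
  calc ∑ n ∈ Finset.Icc 1 (N * N), (d + n : ℝ) * ‖A n‖ ^ 2
      ≤ ∑ n ∈ Finset.Icc 1 (N * N), ∑ p ∈ P.filter (fun p => p.1 * p.2 = n),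
          (d + p.1 * p.2 : ℝ) * (D p.1 * D p.2) := by
        refine Finset.sum_le_sum fun n hn => ?_
        refine (mul_le_mul_of_nonneg_left (h2 n hn) (by positivity)).trans (le_of_eq ?_)
        rw [Finset.mul_sum]
        refine Finset.sum_congr rfl fun p hp => ?_
        rw [← (Finset.mem_filter.mp hp).2]
        push_cast
        ring
    _ = ∑ p ∈ P, (d + p.1 * p.2 : ℝ) * (D p.1 * D p.2) :=
        Finset.sum_fiberwise_of_maps_to (g := fun p : ℕ × ℕ => p.1 * p.2) hmaps _
    _ = _ := by
        rw [sq, sq, Finset.sum_mul_sum, Finset.sum_mul_sum, ← Finset.sum_product',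
          ← Finset.sum_product', Finset.mul_sum, ← Finset.sum_add_distrib]
        refine Finset.sum_congr rfl fun p _ => ?_
        ring

lemma fm_norm_gauss (d : ℕ) [NeZero d] (χ : DirichletCharacter ℂ d) (hχ : χ.IsPrimitive) :
    ‖gaussSum χ (ZMod.stdAddChar (N := d))‖ ^ 2 = d := by
  set ψ : AddChar (ZMod d) ℂ := ZMod.stdAddChar (N := d) with hψ
  set τ := gaussSum χ ψ with hτ
  have hnorm : ∀ a : ZMod d, ‖χ⁻¹ a‖ = ‖χ a‖ := by
    intro a
    rw [← MulChar.star_apply' χ a]; simp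
  have h1 : ∀ n : ZMod d, ∑ a, χ a * ψ (n * a) = χ⁻¹ n * τ := by
    intro n
    have := gaussSum_mulShift_of_isPrimitive ψ hχ n
    rw [← this]
    simp [gaussSum, AddChar.mulShift_apply]
  have h2 : ∑ n : ZMod d, (‖∑ a, χ a * ψ (n * a)‖ : ℂ) ^ 2 = d * ∑ a, (‖χ a‖ : ℂ) ^ 2 := by
    have h3 : ∀ n : ZMod d, (‖∑ a, χ a * ψ (n * a)‖ : ℂ) ^ 2
        = ∑ a, ∑ b, (starRingEnd ℂ (χ a) * χ b) * ψ (n * (b - a)) := by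
      intro n
      rw [← Complex.conj_mul', map_sum, Finset.sum_mul_sum]
      refine Finset.sum_congr rfl fun r _ => Finset.sum_congr rfl fun s _ => ?_
      rw [map_mul, ← AddChar.map_neg_eq_conj, mul_sub, sub_eq_neg_add, AddChar.map_add_eq_mul]
      ring
    have hprim : ψ.IsPrimitive := ZMod.isPrimitive_stdAddChar d
    have hsum : ∀ b : ZMod d, ∑ x : ZMod d, ψ (x * b) = if b = 0 then (d : ℂ) else 0 := by
      intro b
      have := AddChar.sum_mulShift b hprim
      rw [this, ZMod.card]
      split_ifs <;> simp
    simp_rw [h3]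
    rw [Finset.sum_comm, Finset.mul_sum]
    refine Finset.sum_congr rfl fun a _ => ?_
    rw [Finset.sum_comm]
    simp_rw [← Finset.mul_sum, hsum]
    rw [Finset.sum_eq_single a]
    · simp only [sub_self, if_true]
      rw [Complex.conj_mul']
      ring
    · intro b _ hb
      simp [sub_eq_zero, hb]
    · simp
  simp_rw [h1, norm_mul, hnorm] at h2
  have h4 : (∑ a : ZMod d, ‖χ a‖ ^ 2) * ‖τ‖ ^ 2 = d * ∑ a : ZMod d, ‖χ a‖ ^ 2 := by
    have : (∑ n : ZMod d, (‖χ n‖ * ‖τ‖) ^ 2) = d * ∑ a : ZMod d, ‖χ a‖ ^ 2 := by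
      exact_mod_cast h2
    rw [← this, Finset.sum_mul]
    exact Finset.sum_congr rfl fun a _ => by ring
  have h5 : 0 < ∑ a : ZMod d, ‖χ a‖ ^ 2 := by
    refine Finset.sum_pos' (by intros; positivity) ⟨1, Finset.mem_univ _, by simp⟩
  have := mul_left_cancel₀ h5.ne' (h4.trans (mul_comm _ _))
  exact this

lemma fm_gauss (d : ℕ) [NeZero d] (hd : 2 ≤ d) (χ : DirichletCharacter ℂ d) (hχ : χ.IsPrimitive)
    (s : Finset ℕ) (z : ℕ → ℂ) (c₁ c₂ : ℕ → ℂ)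
    (h₁ : ∀ a, 2 * a ≤ d → c₁ a = ∑ n ∈ s, z n * cexp (((2 * π * (a / d) : ℝ) * n : ℝ) * I))
    (h₁' : ∀ a, ¬ 2 * a ≤ d → c₁ a = 0)
    (h₂ : ∀ a, 2 * a < d → c₂ a = ∑ n ∈ s, z n * cexp (((2 * π * (-(a / d)) : ℝ) * n : ℝ) * I))
    (h₂' : ∀ a, ¬ 2 * a < d → c₂ a = 0) :
    (d : ℝ) ^ 2 * ‖∑ n ∈ s, z n * χ n‖ ^ 4 ≤
      8 * (‖∑ a ∈ Finset.Icc 1 d, c₁ a * χ⁻¹ a‖ ^ 4 + ‖∑ a ∈ Finset.Icc 1 d, c₂ a * χ⁻¹ a‖ ^ 4) := by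
  have hd0 : (d : ℂ) ≠ 0 := by exact_mod_cast (NeZero.ne d)
  have : Fact (1 < d) := ⟨by omega⟩
  have hχ' : (χ⁻¹).IsPrimitive := by
    unfold DirichletCharacter.IsPrimitive at hχ ⊢
    rw [DirichletCharacter.conductor_inv, hχ]
  set ψ : AddChar (ZMod d) ℂ := ZMod.stdAddChar (N := d) with hψ
  set τ := gaussSum χ⁻¹ ψ with hτ
  have hτ2 : ‖τ‖ ^ 2 = d := fm_norm_gauss d χ⁻¹ hχ'
  have h1 : ∀ n : ZMod d, ∑ a, χ⁻¹ a * ψ (n * a) = χ n * τ := by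
    intro n
    have := gaussSum_mulShift_of_isPrimitive ψ hχ' n
    rw [inv_inv] at this
    rw [← this]
    simp [gaussSum, AddChar.mulShift_apply]
  set G : ZMod d → ℂ := fun a => ∑ n ∈ s, z n * ψ (n * a) with hG
  have h2 : τ * ∑ n ∈ s, z n * χ n = ∑ a, G a * χ⁻¹ a := by
    rw [Finset.mul_sum]
    simp_rw [hG, Finset.sum_mul]
    rw [Finset.sum_comm]
    refine Finset.sum_congr rfl fun n _ => ?_
    rw [show τ * (z n * χ n) = z n * (χ n * τ) by ring, ← h1, Finset.mul_sum]
    exact Finset.sum_congr rfl fun a _ => by ring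
  have hGpos : ∀ a : ℕ, G (a : ZMod d) = ∑ n ∈ s, z n * cexp (((2 * π * (a / d) : ℝ) * n : ℝ) * I) := by
    intro a
    refine Finset.sum_congr rfl fun n _ => ?_
    congr 1
    have := ZMod.stdAddChar_coe (N := d) ((n : ℤ) * a)
    push_cast at this
    rw [hψ, this]
    congr 1
    push_cast
    ring
  have hGneg : ∀ a : ℕ, G (-(a : ZMod d)) = ∑ n ∈ s, z n * cexp (((2 * π * (-(a / d)) : ℝ) * n : ℝ) * I) := by
    intro a
    refine Finset.sum_congr rfl fun n _ => ?_
    congr 1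
    have := ZMod.stdAddChar_coe (N := d) ((n : ℤ) * (-a))
    push_cast at this
    rw [hψ, this]
    congr 1
    push_cast
    ring
  have h3 : ∑ a, G a * χ⁻¹ a = ∑ a ∈ Finset.range d, G (a : ZMod d) * χ⁻¹ (a : ZMod d) := by
    symm
    refine Finset.sum_bij (fun a _ => (a : ZMod d)) (by simp) ?_ ?_ (by simp)
    · intro a ha b hb hab
      rw [ZMod.natCast_eq_natCast_iff'] at hab
      rwa [Nat.mod_eq_of_lt (Finset.mem_range.mp ha), Nat.mod_eq_of_lt (Finset.mem_range.mp hb)] at hab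
    · intro b _
      exact ⟨b.val, Finset.mem_range.mpr (ZMod.val_lt b), ZMod.natCast_zmod_val b⟩
  have h4 : ∑ a ∈ Finset.range d, G (a : ZMod d) * χ⁻¹ (a : ZMod d)
      = ∑ a ∈ Finset.Icc 1 d, c₁ a * χ⁻¹ a + χ⁻¹ (-1) * ∑ a ∈ Finset.Icc 1 d, c₂ a * χ⁻¹ a := by
    rw [← Finset.sum_filter_add_sum_filter_not (Finset.range d) (fun a => 2 * a ≤ d)]
    congr 1
    · have e1 : ∑ a ∈ Finset.Icc 1 d, c₁ a * χ⁻¹ a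
          = ∑ a ∈ (Finset.Icc 1 d).filter (fun a => 2 * a ≤ d), c₁ a * χ⁻¹ a := by
        symm
        refine Finset.sum_subset (Finset.filter_subset _ _) fun a ha hna => ?_
        rw [h₁' a (by simp only [Finset.mem_filter, not_and] at hna; exact hna ha), zero_mul]
      rw [e1]
      symm
      refine (Finset.sum_subset (s₁ := (Finset.Icc 1 d).filter (fun a => 2 * a ≤ d))
        (s₂ := (Finset.range d).filter (fun a => 2 * a ≤ d)) ?_ ?_).trans ?_
      · intro a ha
        simp only [Finset.mem_filter, Finset.mem_Icc, Finset.mem_range] at ha ⊢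
        omega
      · intro a ha hna
        have : a = 0 := by
          simp only [Finset.mem_filter, Finset.mem_Icc, Finset.mem_range] at ha hna
          omega
        rw [this, Nat.cast_zero, MulChar.map_nonunit χ⁻¹ not_isUnit_zero, mul_zero]
      · refine Finset.sum_congr rfl fun a ha => ?_
        rw [h₁ a (Finset.mem_filter.mp ha).2, hGpos]
    · have e1 : ∑ a ∈ Finset.Icc 1 d, c₂ a * χ⁻¹ a
          = ∑ a ∈ (Finset.Icc 1 d).filter (fun a => 2 * a < d), c₂ a * χ⁻¹ a := by
        symm
        refine Finset.sum_subset (Finset.filter_subset _ _) fun a ha hna => ?_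
        rw [h₂' a (by simp only [Finset.mem_filter, not_and] at hna; exact hna ha), zero_mul]
      rw [e1, Finset.mul_sum]
      refine Finset.sum_bij' (fun a _ => d - a) (fun a _ => d - a) ?_ ?_ ?_ ?_ ?_
      · intro a ha
        simp only [Finset.mem_filter, Finset.mem_Icc, Finset.mem_range] at ha ⊢
        omega
      · intro a ha
        simp only [Finset.mem_filter, Finset.mem_Icc, Finset.mem_range] at ha ⊢
        omega
      · intro a ha
        simp only [Finset.mem_filter, Finset.mem_Icc, Finset.mem_range] at ha ⊢
        omega
      · intro a ha
        simp only [Finset.mem_filter, Finset.mem_Icc, Finset.mem_range] at ha ⊢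
        omega
      · intro a ha
        simp only [Finset.mem_filter, Finset.mem_Icc, Finset.mem_range] at ha
        have e2 : (a : ZMod d) = -((d - a : ℕ) : ZMod d) := by
          rw [Nat.cast_sub (by omega)]; simp
        rw [h₂ (d - a) (by omega), ← hGneg, ← e2]
        have e3 : χ⁻¹ (-1) * χ⁻¹ ((d - a : ℕ) : ZMod d) = χ⁻¹ (a : ZMod d) := by
          rw [← map_mul, neg_one_mul, ← e2]
        rw [← e3]; ring
  set S₁ := ∑ a ∈ Finset.Icc 1 d, c₁ a * χ⁻¹ a
  set S₂ := ∑ a ∈ Finset.Icc 1 d, c₂ a * χ⁻¹ a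
  have h5 : ‖τ * ∑ n ∈ s, z n * χ n‖ ≤ ‖S₁‖ + ‖S₂‖ := by
    rw [h2, h3, h4]
    refine (norm_add_le _ _).trans ?_
    rw [norm_mul]
    have := DirichletCharacter.norm_le_one χ⁻¹ (-1)
    have := mul_le_mul_of_nonneg_right this (norm_nonneg S₂)
    linarith
  calc (d : ℝ) ^ 2 * ‖∑ n ∈ s, z n * χ n‖ ^ 4 = ‖τ * ∑ n ∈ s, z n * χ n‖ ^ 4 := by
        rw [norm_mul, mul_pow, ← hτ2]; ring
    _ ≤ (‖S₁‖ + ‖S₂‖) ^ 4 := pow_le_pow_left₀ (norm_nonneg _) h5 4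
    _ ≤ _ := by
        have := add_pow_le (norm_nonneg S₁) (norm_nonneg S₂) 4
        norm_num at this
        exact this

lemma fm_norm_e (x : ℝ) : ‖cexp (x * I)‖ = 1 := Complex.norm_exp_ofReal_mul_I x

lemma fm_e_lip (x y : ℝ) : ‖cexp (x * I) - cexp (y * I)‖ ≤ |x - y| := by
  have h : cexp (x * I) - cexp (y * I) = cexp (y * I) * (cexp (I * ((x - y : ℝ) : ℂ)) - 1) := by
    rw [mul_sub, ← Complex.exp_add, mul_one]
    congr 2
    push_cast
    ring
  rw [h, norm_mul, fm_norm_e, one_mul]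
  exact Real.norm_exp_I_mul_ofReal_sub_one_le

lemma fm_e_lower (δ : ℝ) (hδ : |δ| ≤ 3 * π / 2) : |δ| / 5 ≤ ‖1 - cexp (δ * I)‖ := by
  have h1 : ‖1 - cexp (δ * I)‖ = 2 * |Real.sin (δ / 2)| := by
    rw [norm_sub_rev, mul_comm (δ : ℂ) I, Complex.norm_exp_I_mul_ofReal_sub_one]
    simp
  rw [h1, ← abs_of_nonneg (abs_nonneg (Real.sin (δ/2)))]
  have h2 : |Real.sin (δ / 2)| = |Real.sin (|δ| / 2)| := by
    rcases abs_cases δ with h | h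
    · rw [h.1]
    · rw [h.1, neg_div, Real.sin_neg, abs_neg]
  rw [abs_abs, h2]
  set x := |δ| with hx
  have hx0 : 0 ≤ x := abs_nonneg _
  have hpi := Real.pi_pos
  have hpi4 := Real.pi_lt_d2
  have h3 : x / 10 ≤ Real.sin (x / 2) := by
    by_cases hxp : x ≤ π
    · have := Real.mul_le_sin (x := x / 2) (by positivity) (by linarith)
      have h4 : x / 10 ≤ 2 / π * (x / 2) := by
        rw [div_mul_div_comm, div_le_div_iff₀ (by positivity) (by positivity)]
        nlinarith
      linarith
    · push Not at hxp
      have := Real.mul_le_sin (x := π - x / 2) (by linarith) (by linarith)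
      rw [Real.sin_pi_sub] at this
      have h4 : 1 / 2 ≤ 2 / π * (π - x / 2) := by
        rw [div_mul_eq_mul_div, div_le_div_iff₀ (by positivity) (by positivity)]
        linarith
      linarith
  have := le_abs_self (Real.sin (x / 2))
  linarith

/-- Kusmin-Landau type bound -/
lemma fm_kl_aux (b φ : ℕ → ℝ) (lam : ℝ) (hlam : 0 < lam) (K : ℕ)
    (hb0 : ∀ k, 0 ≤ b k) (hb : Antitone b)
    (hδ : ∀ k ≤ K, lam ≤ ‖1 - cexp ((φ (k + 1) - φ k : ℝ) * I)‖) :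
    ‖∑ k ∈ Finset.range (K + 1), b k * cexp (φ k * I)
      - b K * (1 - cexp ((φ (K + 1) - φ K : ℝ) * I))⁻¹ * (-cexp (φ (K + 1) * I))‖
      ≤ b 0 / lam + (b 0 - b K) / lam
        + b 0 * (∑ k ∈ Finset.range K, |(φ (k + 2) - φ (k + 1)) - (φ (k + 1) - φ k)|) / lam ^ 2 := by
  have hne : ∀ k ≤ K, (1 - cexp ((φ (k + 1) - φ k : ℝ) * I)) ≠ 0 := by
    intro k hk h
    have := hδ k hk
    rw [h, norm_zero] at this
    linarith
  have hterm : ∀ k ≤ K, cexp (φ k * I) = (1 - cexp ((φ (k + 1) - φ k : ℝ) * I))⁻¹ *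
      (cexp (φ k * I) - cexp (φ (k + 1) * I)) := by
    intro k hk
    have h1 : cexp (φ k * I) - cexp (φ (k + 1) * I)
        = (1 - cexp ((φ (k + 1) - φ k : ℝ) * I)) * cexp (φ k * I) := by
      rw [sub_mul, one_mul, ← Complex.exp_add]
      congr 2
      push_cast
      ring
    rw [h1, inv_mul_cancel_left₀ (hne k hk)]
  have hinv : ∀ k ≤ K, ‖(1 - cexp ((φ (k + 1) - φ k : ℝ) * I))⁻¹‖ ≤ 1 / lam := by
    intro k hk
    rw [norm_inv, ← one_div]
    exact one_div_le_one_div_of_le hlam (hδ k hk)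
  induction K with
  | zero =>
    simp only [zero_add, Finset.sum_range_one, Finset.range_zero, Finset.sum_empty, sub_self,
      zero_div, mul_zero, add_zero]
    have h0 := hterm 0 le_rfl
    have e1 : (b 0 : ℂ) * cexp (φ 0 * I)
      - b 0 * (1 - cexp ((φ 1 - φ 0 : ℝ) * I))⁻¹ * (-cexp (φ 1 * I))
      = b 0 * (1 - cexp ((φ 1 - φ 0 : ℝ) * I))⁻¹ * cexp (φ 0 * I) := by
      rw [zero_add] at h0
      nth_rewrite 1 [h0]
      ring
    rw [e1, norm_mul, norm_mul, fm_norm_e, mul_one, Complex.norm_real, Real.norm_of_nonneg (hb0 0)]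
    have := mul_le_mul_of_nonneg_left (hinv 0 le_rfl) (hb0 0)
    rw [mul_one_div] at this
    exact this
  | succ K ih =>
    have ih' := ih (fun k hk => hδ k (by omega)) (fun k hk => hne k (by omega))
      (fun k hk => hterm k (by omega)) (fun k hk => hinv k (by omega))
    set g : ℕ → ℂ := fun k => (1 - cexp ((φ (k + 1) - φ k : ℝ) * I))⁻¹ with hg
    have e1 : ∑ k ∈ Finset.range (K + 1 + 1), (b k : ℂ) * cexp (φ k * I)
      - b (K + 1) * g (K + 1) * (-cexp (φ (K + 1 + 1) * I))
      = (∑ k ∈ Finset.range (K + 1), (b k : ℂ) * cexp (φ k * I)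
          - b K * g K * (-cexp (φ (K + 1) * I)))
        + (b (K + 1) * (g (K + 1) - g K) - (b K - b (K + 1) : ℝ) * g K) * cexp (φ (K + 1) * I) := by
      rw [Finset.sum_range_succ]
      have h : cexp (φ (K + 1) * I) = g (K + 1) * (cexp (φ (K + 1) * I) - cexp (φ (K + 1 + 1) * I)) :=
        hterm (K + 1) le_rfl
      push_cast
      linear_combination (b (K + 1) : ℂ) * h
    change ‖∑ k ∈ Finset.range (K + 1 + 1), (b k : ℂ) * cexp (φ k * I)
      - b (K + 1) * g (K + 1) * (-cexp (φ (K + 1 + 1) * I))‖ ≤ _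
    rw [e1]
    refine (norm_add_le _ _).trans ?_
    have h2 : ‖g (K + 1) - g K‖ ≤ |(φ (K + 2) - φ (K + 1)) - (φ (K + 1) - φ K)| / lam ^ 2 := by
      have hA := hne (K + 1) le_rfl
      have hB := hne K (by omega)
      simp only [hg]
      rw [inv_sub_inv hA hB, norm_div, norm_mul]
      have h3 : ‖(1 - cexp ((φ (K + 1) - φ K : ℝ) * I)) - (1 - cexp ((φ (K + 1 + 1) - φ (K + 1) : ℝ) * I))‖
          ≤ |(φ (K + 2) - φ (K + 1)) - (φ (K + 1) - φ K)| := by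
        rw [sub_sub_sub_cancel_left]
        exact fm_e_lip _ _
      have h4 : lam ^ 2 ≤ ‖1 - cexp ((φ (K + 1 + 1) - φ (K + 1) : ℝ) * I)‖ *
          ‖1 - cexp ((φ (K + 1) - φ K : ℝ) * I)‖ := by
        rw [sq]
        exact mul_le_mul (hδ _ le_rfl) (hδ _ (by omega)) hlam.le (norm_nonneg _)
      exact div_le_div₀ (abs_nonneg _) h3 (by positivity) h4
    have h5 : ‖(b (K + 1) * (g (K + 1) - g K) - (b K - b (K + 1) : ℝ) * g K) * cexp (φ (K + 1) * I)‖
        ≤ b 0 * (|(φ (K + 2) - φ (K + 1)) - (φ (K + 1) - φ K)| / lam ^ 2)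
          + (b K - b (K + 1)) / lam := by
      rw [norm_mul, fm_norm_e, mul_one]
      refine (norm_sub_le _ _).trans ?_
      rw [norm_mul, norm_mul, Complex.norm_real, Complex.norm_real, Real.norm_of_nonneg (hb0 _),
        Real.norm_of_nonneg (sub_nonneg.mpr (hb (Nat.le_succ K)))]
      refine add_le_add ?_ ?_
      · exact mul_le_mul (hb (Nat.zero_le _)) h2 (norm_nonneg _) (hb0 _)
      · have := mul_le_mul_of_nonneg_left (hinv K (by omega))
          (sub_nonneg.mpr (hb (Nat.le_succ K)))
        rwa [mul_one_div] at this
    refine (add_le_add ih' h5).trans (le_of_eq ?_)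
    rw [Finset.sum_range_succ]
    field_simp
    ring

lemma fm_kl (b φ : ℕ → ℝ) (lam D : ℝ) (hlam : 0 < lam) (K : ℕ)
    (hb0 : ∀ k, 0 ≤ b k) (hb : Antitone b)
    (hδ : ∀ k < K, lam ≤ ‖1 - cexp ((φ (k + 1) - φ k : ℝ) * I)‖)
    (hD : ∀ K', K' + 1 = K → (∑ k ∈ Finset.range K', |(φ (k + 2) - φ (k + 1)) - (φ (k + 1) - φ k)|) ≤ D)
    (hD0 : 0 ≤ D) :
    ‖∑ k ∈ Finset.range K, (b k : ℂ) * cexp (φ k * I)‖ ≤ b 0 * (2 / lam + D / lam ^ 2) := by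
  rcases K with _ | K
  · simp only [Finset.range_zero, Finset.sum_empty, norm_zero]
    have := hb0 0
    positivity
  have h1 := fm_kl_aux b φ lam hlam K hb0 hb (fun k hk => hδ k (by omega))
  have h2 : ‖(b K : ℂ) * (1 - cexp ((φ (K + 1) - φ K : ℝ) * I))⁻¹ * (-cexp (φ (K + 1) * I))‖
      ≤ b K / lam := by
    rw [norm_mul, norm_mul, norm_neg, fm_norm_e, mul_one, Complex.norm_real,
      Real.norm_of_nonneg (hb0 K), norm_inv, div_eq_mul_inv]
    exact mul_le_mul_of_nonneg_left (inv_anti₀ hlam (hδ K (by omega))) (hb0 K)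
  have h3 := norm_le_norm_sub_add (∑ k ∈ Finset.range (K + 1), (b k : ℂ) * cexp (φ k * I))
    ((b K : ℂ) * (1 - cexp ((φ (K + 1) - φ K : ℝ) * I))⁻¹ * (-cexp (φ (K + 1) * I)))
  refine (h3.trans (add_le_add h1 h2)).trans ?_
  have h4 := hD K rfl
  have h5 : b 0 * (∑ k ∈ Finset.range K, |(φ (k + 2) - φ (k + 1)) - (φ (k + 1) - φ k)|) / lam ^ 2
      ≤ b 0 * D / lam ^ 2 := by
    have := hb0 0
    gcongr
  calc _ ≤ b 0 / lam + (b 0 - b K) / lam + b 0 * D / lam ^ 2 + b K / lam := by linarith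
    _ = _ := by ring

noncomputable def fmZ (α t : ℝ) (n : ℕ) : ℂ :=
  ((1 / √(n : ℝ) : ℝ) : ℂ) * cexp ((α * n - t * Real.log n : ℝ) * I)

lemma fm_tele (m : ℕ → ℝ) (hm : Antitone m) (hm0 : ∀ k, 0 ≤ m k) (K : ℕ) :
    ∑ k ∈ Finset.range K, |m (k + 1) - m k| ≤ m 0 := by
  have : ∀ k, |m (k + 1) - m k| = m k - m (k + 1) := by
    intro k
    rw [abs_sub_comm, abs_of_nonneg (sub_nonneg.mpr (hm (Nat.le_succ k)))]
  simp_rw [this]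
  rw [Finset.sum_range_sub']
  have := hm0 K
  linarith

lemma fm_tail (α t : ℝ) (M R : ℕ) (hM : 1 ≤ M) (hα0 : 0 < |α|) (hα : |α| ≤ π)
    (ht : 2 * |t| ≤ M * |α|) :
    ‖∑ n ∈ Finset.Ico M R, fmZ α t n‖ ≤ 70 / (√(M : ℝ) * |α|) := by
  have hM' : (1 : ℝ) ≤ M := by exact_mod_cast hM
  have hMpos : (0 : ℝ) < M := by linarith
  rw [Finset.sum_Ico_eq_sum_range]
  set m : ℕ → ℝ := fun k => Real.log (1 + 1 / (M + k : ℝ)) with hm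
  have hmanti : Antitone m := by
    intro a b hab
    have hab' : (a : ℝ) ≤ b := by exact_mod_cast hab
    simp only [hm]
    apply Real.log_le_log (by positivity)
    gcongr
  have hm0 : ∀ k, 0 ≤ m k := fun k => Real.log_nonneg (by
    have : (0 : ℝ) ≤ 1 / (M + k : ℝ) := by positivity
    linarith)
  have hm1 : ∀ k, m k ≤ 1 / M := by
    intro k
    refine (hmanti (Nat.zero_le k)).trans ?_
    have := Real.log_le_sub_one_of_pos (x := 1 + 1 / (M : ℝ)) (by positivity)
    simp only [hm]
    push_cast
    rw [add_zero]
    linarith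
  set φ : ℕ → ℝ := fun k => α * (M + k : ℕ) - t * Real.log (M + k : ℕ) with hφ
  have hφd : ∀ k, φ (k + 1) - φ k = α - t * m k := by
    intro k
    have hx : (0 : ℝ) < M + k := by positivity
    have : m k = Real.log (M + k + 1) - Real.log (M + k) := by
      simp only [hm]
      rw [← Real.log_div (by positivity) (by positivity)]
      congr 1
      field_simp
    rw [this]
    simp only [hφ]
    push_cast
    rw [← add_assoc]
    ring
  have htm : ∀ k, |t * m k| ≤ |α| / 2 := by
    intro k
    rw [abs_mul, abs_of_nonneg (hm0 k)]
    calc |t| * m k ≤ |t| * (1 / M) := by gcongr; exact hm1 k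
      _ = |t| / M := by ring
      _ ≤ _ := by
        rw [div_le_div_iff₀ hMpos (by norm_num)]
        linarith
  have key := fm_kl (fun k => 1 / √((M + k : ℕ) : ℝ)) φ (|α| / 10) (|α| / 2) (by positivity) (R - M)
    (fun k => by positivity) ?_ ?_ ?_ (by positivity)
  · have e1 : ∀ k, fmZ α t (M + k) = ((1 / √((M + k : ℕ) : ℝ) : ℝ) : ℂ) * cexp (φ k * I) := fun k => rfl
    simp_rw [e1]
    refine key.trans (le_of_eq ?_)
    rw [add_zero]
    field_simp
    norm_num
  · intro a b hab
    have hab' : ((M + a : ℕ) : ℝ) ≤ (M + b : ℕ) := by exact_mod_cast Nat.add_le_add_left hab M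
    have : (0 : ℝ) < (M + a : ℕ) := by positivity
    exact one_div_le_one_div_of_le (Real.sqrt_pos.mpr this) (Real.sqrt_le_sqrt hab')
  · intro k _
    rw [hφd]
    have h1 := htm k
    have h2 : |α - t * m k| ≤ |α| + |t * m k| := abs_sub _ _
    have h3 : |α| - |t * m k| ≤ |α - t * m k| := abs_sub_abs_le_abs_sub _ _
    have h4 := fm_e_lower (α - t * m k) (by linarith)
    linarith
  · intro K' _
    have e2 : ∀ k, |(φ (k + 2) - φ (k + 1)) - (φ (k + 1) - φ k)| = |t| * |m (k + 1) - m k| := by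
      intro k
      rw [hφd (k + 1), hφd k, ← abs_mul, ← abs_neg]
      congr 1
      ring
    simp_rw [e2, ← Finset.mul_sum]
    have h1 := fm_tele m hmanti hm0 K'
    have h2 := htm 0
    rw [abs_mul, abs_of_nonneg (hm0 0)] at h2
    exact (mul_le_mul_of_nonneg_left h1 (abs_nonneg t)).trans h2

lemma fm_corr (α t : ℝ) (N K k : ℕ) (hN : 1 ≤ N) (hk : 1 ≤ k) (hkN : k ≤ N) (hK : K ≤ N)
    (ht0 : 0 < |t|) (ht : |t| * k ≤ (N : ℝ) ^ 2) :
    ‖∑ n ∈ Finset.Ico N (N + K), fmZ α t (n + k) * starRingEnd ℂ (fmZ α t n)‖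
      ≤ 960 * N / (|t| * k) := by
  have hN' : (1 : ℝ) ≤ N := by exact_mod_cast hN
  have hk' : (1 : ℝ) ≤ k := by exact_mod_cast hk
  have hkN' : (k : ℝ) ≤ N := by exact_mod_cast hkN
  have hNpos : (0 : ℝ) < N := by linarith
  have hkpos : (0 : ℝ) < k := by linarith
  rw [Finset.sum_Ico_eq_sum_range, Nat.add_sub_cancel_left]
  set m : ℕ → ℝ := fun j => Real.log (1 + k / ((N + j : ℝ) * (N + j + 1 + k))) with hm
  have hmanti : Antitone m := by
    intro a b hab
    have hab' : (a : ℝ) ≤ b := by exact_mod_cast hab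
    simp only [hm]
    apply Real.log_le_log (by positivity)
    gcongr
  have hm0 : ∀ j, 0 ≤ m j := fun j => Real.log_nonneg (by
    have : (0 : ℝ) ≤ k / ((N + j : ℝ) * (N + j + 1 + k)) := by positivity
    linarith)
  have hm1 : ∀ j, m j ≤ k / (N : ℝ) ^ 2 := by
    intro j
    have h1 := Real.log_le_sub_one_of_pos (x := 1 + k / ((N + j : ℝ) * (N + j + 1 + k))) (by positivity)
    simp only [hm]
    have h2 : k / ((N + j : ℝ) * (N + j + 1 + k)) ≤ k / (N : ℝ) ^ 2 := by
      apply div_le_div_of_nonneg_left hkpos.le (by positivity)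
      have : (0 : ℝ) ≤ j := by positivity
      nlinarith
    linarith
  have hm2 : ∀ j < K, k / (6 * (N : ℝ) ^ 2) ≤ m j := by
    intro j hj
    have hj' : (j : ℝ) + 1 ≤ N := by exact_mod_cast (by omega : j + 1 ≤ N)
    have hj0 : (0 : ℝ) ≤ j := by positivity
    have h1 := Real.one_sub_inv_le_log_of_pos (x := 1 + k / ((N + j : ℝ) * (N + j + 1 + k))) (by positivity)
    simp only [hm]
    refine le_trans ?_ h1
    have e : 1 - (1 + k / ((N + j : ℝ) * (N + j + 1 + k)))⁻¹ = k / ((N + j + 1) * (N + j + k)) := by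
      have : ((N + j : ℝ) * (N + j + 1 + k)) + k = (N + j + 1) * (N + j + k) := by ring
      have h3 : 1 + k / ((N + j : ℝ) * (N + j + 1 + k)) = ((N + j + 1) * (N + j + k)) / ((N + j : ℝ) * (N + j + 1 + k)) := by
        rw [← this]; field_simp
      rw [h3, inv_div]
      field_simp
      ring
    rw [e]
    apply div_le_div_of_nonneg_left hkpos.le (by positivity)
    calc ((N : ℝ) + j + 1) * (N + j + k) ≤ (2 * N) * (3 * N) := by
          apply mul_le_mul <;> first | positivity | linarith
      _ = _ := by ring
  set φ : ℕ → ℝ := fun j => α * k - t * (Real.log (N + j + k : ℝ) - Real.log (N + j : ℝ)) with hφ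
  have hφd : ∀ j, φ (j + 1) - φ j = t * m j := by
    intro j
    have hx : (0 : ℝ) < N + j := by positivity
    have : m j = Real.log (N + j + 1) + Real.log (N + j + k) - (Real.log (N + j) + Real.log (N + j + 1 + k)) := by
      simp only [hm]
      rw [← Real.log_mul (by positivity) (by positivity), ← Real.log_mul (by positivity) (by positivity),
        ← Real.log_div (by positivity) (by positivity)]
      congr 1
      field_simp
      ring
    rw [this]
    simp only [hφ]
    push_cast
    rw [← add_assoc]
    ring
  have htm : ∀ j, |t * m j| ≤ |t| * k / (N : ℝ) ^ 2 := by
    intro j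
    rw [abs_mul, abs_of_nonneg (hm0 j), mul_div_assoc]
    exact mul_le_mul_of_nonneg_left (hm1 j) (abs_nonneg t)
  have htm1 : |t| * k / (N : ℝ) ^ 2 ≤ 1 := by
    rw [div_le_one (by positivity)]; exact ht
  set lam : ℝ := |t| * k / (30 * (N : ℝ) ^ 2) with hlam
  have hlampos : 0 < lam := by positivity
  have key := fm_kl (fun j => 1 / √((N + j + k : ℝ)) * (1 / √((N + j : ℝ)))) φ lam
    (|t| * k / (N : ℝ) ^ 2) hlampos K (fun k => by positivity) ?_ ?_ ?_ (by positivity)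
  · have e1 : ∀ j, fmZ α t (N + j + k) * starRingEnd ℂ (fmZ α t (N + j))
        = ((1 / √((N + j + k : ℝ)) * (1 / √((N + j : ℝ))) : ℝ) : ℂ) * cexp (φ j * I) := by
      intro j
      have h1 : starRingEnd ℂ (fmZ α t (N + j)) = ((1 / √((N + j : ℕ) : ℝ) : ℝ) : ℂ) *
          cexp (-(α * (N + j : ℕ) - t * Real.log (N + j : ℕ) : ℝ) * I) := by
        rw [fmZ, map_mul, Complex.conj_ofReal, ← Complex.exp_conj, map_mul, Complex.conj_ofReal,
          Complex.conj_I]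
        congr 2
        push_cast
        ring
      rw [h1, fmZ, mul_mul_mul_comm, ← Complex.exp_add]
      push_cast
      congr 2
      simp only [hφ]
      push_cast
      ring
    simp_rw [e1]
    refine key.trans ?_
    have hb : 1 / √((N + (0 : ℕ) + k : ℝ)) * (1 / √((N + (0 : ℕ) : ℝ))) ≤ 1 / N := by
      rw [Nat.cast_zero, add_zero]
      have h1 : 1 / √(N + k : ℝ) ≤ 1 / √(N : ℝ) :=
        one_div_le_one_div_of_le (Real.sqrt_pos.mpr hNpos) (Real.sqrt_le_sqrt (by linarith))
      calc 1 / √(N + k : ℝ) * (1 / √(N : ℝ)) ≤ 1 / √(N : ℝ) * (1 / √(N : ℝ)) := by gcongr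
        _ = 1 / N := by rw [div_mul_div_comm, Real.mul_self_sqrt hNpos.le, one_mul]
    calc _ ≤ 1 / (N : ℝ) * (2 / lam + |t| * k / (N : ℝ) ^ 2 / lam ^ 2) := by gcongr
      _ = 960 * N / (|t| * k) := by
        rw [hlam]
        field_simp
        norm_num
  · intro a b hab
    have hab' : (a : ℝ) ≤ b := by exact_mod_cast hab
    have h0 : (0 : ℝ) < N + a := by positivity
    have h1 : (0 : ℝ) < N + a + k := by positivity
    have s0 := Real.sqrt_pos.mpr h0
    have s1 := Real.sqrt_pos.mpr h1
    simp only
    gcongr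
  · intro j hj
    rw [hφd]
    have h1 := htm j
    have h4 := fm_e_lower (t * m j) (by have := Real.pi_gt_three; linarith)
    refine le_trans ?_ h4
    rw [abs_mul, abs_of_nonneg (hm0 j), hlam]
    calc |t| * k / (30 * (N : ℝ) ^ 2) = |t| * (k / (6 * (N : ℝ) ^ 2)) / 5 := by field_simp; norm_num
      _ ≤ _ := by
        have := hm2 j hj
        gcongr
  · intro K' _
    have e2 : ∀ k, |(φ (k + 2) - φ (k + 1)) - (φ (k + 1) - φ k)| = |t| * |m (k + 1) - m k| := by
      intro k
      rw [hφd (k + 1), hφd k, ← abs_mul]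
      congr 1
      ring
    simp_rw [e2, ← Finset.mul_sum]
    have h1 := fm_tele m hmanti hm0 K'
    have h2 := htm 0
    rw [abs_mul, abs_of_nonneg (hm0 0)] at h2
    exact (mul_le_mul_of_nonneg_left h1 (abs_nonneg t)).trans h2

lemma fm_vdc (z : ℕ → ℂ) (N K H : ℕ) (hH : H ≤ N) (B : ℕ → ℝ) (hB0 : ∀ k, 0 ≤ B k)
    (hB : ∀ k < H, ‖∑ n ∈ Finset.Ico N (N + (K - k)), z (n + k) * starRingEnd ℂ (z n)‖ ≤ B k) :
    (H : ℝ) * ‖∑ n ∈ Finset.Ico N (N + K), z n‖ ^ 2 ≤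
      (K + H) * (2 * ∑ k ∈ Finset.range H, B k) := by
  rcases Nat.eq_zero_or_pos H with rfl | hHpos
  · simp
  have hHr : (0 : ℝ) < H := by exact_mod_cast hHpos
  set w : ℕ → ℂ := fun n => if n ∈ Finset.Ico N (N + K) then z n else 0 with hw
  set S := ∑ n ∈ Finset.Ico N (N + K), z n with hS
  set J := Finset.Ico (N - H) (N + K) with hJ
  have ha : ∀ h ∈ Finset.range H, ∑ m ∈ J, w (m + h) = S := by
    intro h hh
    have hh' := Finset.mem_range.mp hh
    rw [hJ, Finset.sum_Ico_add' w (N - H) (N + K) h, hS]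
    symm
    rw [show ∑ n ∈ Finset.Ico N (N + K), z n = ∑ n ∈ Finset.Ico N (N + K), w n from
      Finset.sum_congr rfl fun n hn => by simp only [hw]; rw [if_pos hn]]
    apply Finset.sum_subset
    · intro n hn
      rw [Finset.mem_Ico] at hn ⊢
      omega
    · intro n _ hn
      simp only [hw]; rw [if_neg hn]
  have hb1 : ∀ h k, h + k < H → ‖∑ m ∈ J, w (m + (h + k)) * starRingEnd ℂ (w (m + h))‖ ≤ B k := by
    intro h k hk
    refine le_trans (le_of_eq ?_) (hB k (by omega))
    congr 1
    rw [hJ]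
    have := Finset.sum_Ico_add' (fun n => w (n + k) * starRingEnd ℂ (w n)) (N - H) (N + K) h
    simp only [add_assoc] at this ⊢
    rw [this]
    symm
    rw [show ∑ n ∈ Finset.Ico N (N + (K - k)), z (n + k) * starRingEnd ℂ (z n)
      = ∑ n ∈ Finset.Ico N (N + (K - k)), w (n + k) * starRingEnd ℂ (w n) from
      Finset.sum_congr rfl fun n hn => by
        rw [Finset.mem_Ico] at hn
        simp only [hw]
        rw [if_pos (by rw [Finset.mem_Ico]; omega), if_pos (by rw [Finset.mem_Ico]; omega)]]
    apply Finset.sum_subset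
    · intro n hn
      rw [Finset.mem_Ico] at hn ⊢
      omega
    · intro n _ hn
      rw [Finset.mem_Ico] at hn
      simp only [hw]
      by_cases h1 : n ∈ Finset.Ico N (N + K)
      · have hx : n + k ∉ Finset.Ico N (N + K) := by
          rw [Finset.mem_Ico] at h1 ⊢
          omega
        rw [if_neg hx, zero_mul]
      · rw [if_neg h1, map_zero, mul_zero]
  have hb : ∀ h ∈ Finset.range H, ∀ h' ∈ Finset.range H,
      ‖∑ m ∈ J, w (m + h) * starRingEnd ℂ (w (m + h'))‖ ≤ B ((h - h') + (h' - h)) := by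
    intro h hh h' hh'
    rw [Finset.mem_range] at hh hh'
    rcases le_total h' h with hle | hle
    · obtain ⟨k, rfl⟩ := Nat.exists_eq_add_of_le hle
      have := hb1 h' k hh
      rw [show (h' + k - h') + (h' - (h' + k)) = k by omega]
      exact this
    · obtain ⟨k, rfl⟩ := Nat.exists_eq_add_of_le hle
      have := hb1 h k hh'
      rw [show (h - (h + k)) + (h + k - h) = k by omega]
      rw [← Complex.norm_conj, map_sum]
      refine le_trans (le_of_eq ?_) this
      congr 1
      refine Finset.sum_congr rfl fun m _ => ?_
      rw [map_mul, Complex.conj_conj, mul_comm]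
  -- double counting
  have hc : (H : ℂ) * S = ∑ m ∈ J, ∑ h ∈ Finset.range H, w (m + h) := by
    rw [Finset.sum_comm, Finset.sum_congr rfl ha]
    simp
  have hcard : (J.card : ℝ) ≤ K + H := by
    have : J.card ≤ K + H := by rw [hJ, Nat.card_Ico]; omega
    exact_mod_cast this
  have hd : ((H : ℝ) * ‖S‖) ^ 2 ≤ (K + H) * ∑ m ∈ J, ‖∑ h ∈ Finset.range H, w (m + h)‖ ^ 2 := by
    have h1 : (H : ℝ) * ‖S‖ ≤ ∑ m ∈ J, ‖∑ h ∈ Finset.range H, w (m + h)‖ := by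
      have : (H : ℝ) * ‖S‖ = ‖(H : ℂ) * S‖ := by simp
      rw [this, hc]
      exact norm_sum_le _ _
    refine (pow_le_pow_left₀ (by positivity) h1 2).trans (sq_sum_le_card_mul_sum_sq.trans ?_)
    gcongr
  have he : ∑ m ∈ J, ‖∑ h ∈ Finset.range H, w (m + h)‖ ^ 2
      ≤ ∑ h ∈ Finset.range H, ∑ h' ∈ Finset.range H, B ((h - h') + (h' - h)) := by
    have h1 : ((∑ m ∈ J, ‖∑ h ∈ Finset.range H, w (m + h)‖ ^ 2 : ℝ) : ℂ)
        = ∑ h ∈ Finset.range H, ∑ h' ∈ Finset.range H, ∑ m ∈ J, w (m + h) * starRingEnd ℂ (w (m + h')) := by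
      push_cast
      have h2 : ∀ m, (‖∑ h ∈ Finset.range H, w (m + h)‖ : ℂ) ^ 2
          = ∑ h ∈ Finset.range H, ∑ h' ∈ Finset.range H, w (m + h) * starRingEnd ℂ (w (m + h')) := by
        intro m
        rw [← Complex.mul_conj', map_sum, Finset.sum_mul_sum]
      simp_rw [h2]
      rw [Finset.sum_comm]
      refine Finset.sum_congr rfl fun h _ => ?_
      rw [Finset.sum_comm]
    have h3 : 0 ≤ ∑ m ∈ J, ‖∑ h ∈ Finset.range H, w (m + h)‖ ^ 2 :=
      Finset.sum_nonneg (by intros; positivity)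
    rw [← Real.norm_of_nonneg h3, ← Complex.norm_real, h1]
    refine (norm_sum_le _ _).trans (Finset.sum_le_sum fun h hh => ?_)
    exact (norm_sum_le _ _).trans (Finset.sum_le_sum fun h' hh' => hb h hh h' hh')
  have hf : ∀ h ∈ Finset.range H, ∑ h' ∈ Finset.range H, B ((h - h') + (h' - h))
      ≤ 2 * ∑ k ∈ Finset.range H, B k := by
    intro h hh
    rw [Finset.mem_range] at hh
    rw [← Finset.sum_filter_add_sum_filter_not (Finset.range H) (fun h' => h' ≤ h), two_mul]
    refine add_le_add ?_ ?_
    · rw [← Finset.sum_image (g := fun h' => (h - h') + (h' - h)) (f := B)]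
      · refine Finset.sum_le_sum_of_subset_of_nonneg ?_ (fun k _ _ => hB0 k)
        intro k hk
        simp only [Finset.mem_image, Finset.mem_filter, Finset.mem_range] at hk ⊢
        obtain ⟨a, ha, rfl⟩ := hk
        omega
      · intro a ha b hb hab
        simp only [Finset.coe_filter, Set.mem_ofPred_eq, Finset.mem_range] at ha hb hab
        omega
    · rw [← Finset.sum_image (g := fun h' => (h - h') + (h' - h)) (f := B)]
      · refine Finset.sum_le_sum_of_subset_of_nonneg ?_ (fun k _ _ => hB0 k)
        intro k hk
        simp only [Finset.mem_image, Finset.mem_filter, Finset.mem_range] at hk ⊢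
        obtain ⟨a, ha, rfl⟩ := hk
        omega
      · intro a ha b hb hab
        simp only [Finset.coe_filter, Set.mem_ofPred_eq, Finset.mem_range] at ha hb hab
        omega
  have hg := he.trans (Finset.sum_le_sum hf)
  rw [Finset.sum_const, Finset.card_range, nsmul_eq_mul] at hg
  have hh := hd.trans (mul_le_mul_of_nonneg_left hg (by positivity))
  have : (H : ℝ) * ((H : ℝ) * ‖S‖ ^ 2) ≤ H * ((K + H) * (2 * ∑ k ∈ Finset.range H, B k)) := by
    calc _ = ((H : ℝ) * ‖S‖) ^ 2 := by ring
      _ ≤ _ := hh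
      _ = _ := by ring
  exact le_of_mul_le_mul_left this hHr

lemma fm_norm_Z (α t : ℝ) (n : ℕ) : ‖fmZ α t n‖ = 1 / √(n : ℝ) := by
  rw [fmZ, norm_mul, fm_norm_e, mul_one, Complex.norm_real, Real.norm_of_nonneg (by positivity)]

lemma fm_block (α t : ℝ) (N K : ℕ) (hN : 1 ≤ N) (hK : K ≤ N) :
    ‖∑ n ∈ Finset.Ico N (N + K), fmZ α t n‖ ^ 2
      ≤ 15360 * (1 + Real.log N) * ((1 + |t|) / N + N / (1 + |t|)) := by
  have hN' : (1 : ℝ) ≤ N := by exact_mod_cast hN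
  have hNpos : (0 : ℝ) < N := by linarith
  have hKN : (K : ℝ) ≤ N := by exact_mod_cast hK
  have hlog : 0 ≤ Real.log N := Real.log_nonneg hN'
  have habs := abs_nonneg t
  by_cases ht : |t| < 1
  · have h1 : ‖∑ n ∈ Finset.Ico N (N + K), fmZ α t n‖ ≤ √(N : ℝ) := by
      refine (norm_sum_le _ _).trans ?_
      have : ∀ n ∈ Finset.Ico N (N + K), ‖fmZ α t n‖ ≤ 1 / √(N : ℝ) := by
        intro n hn
        rw [fm_norm_Z]
        have : (N : ℝ) ≤ n := by exact_mod_cast (Finset.mem_Ico.mp hn).1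
        exact one_div_le_one_div_of_le (Real.sqrt_pos.mpr hNpos) (Real.sqrt_le_sqrt this)
      refine (Finset.sum_le_sum this).trans ?_
      rw [Finset.sum_const, Nat.card_Ico, Nat.add_sub_cancel_left, nsmul_eq_mul, mul_one_div,
        div_le_iff₀ (Real.sqrt_pos.mpr hNpos), Real.mul_self_sqrt hNpos.le]
      exact hKN
    have h2 := pow_le_pow_left₀ (norm_nonneg _) h1 2
    rw [Real.sq_sqrt hNpos.le] at h2
    refine h2.trans ?_
    have h3 : (N : ℝ) ≤ 2 * (N / (1 + |t|)) := by
      rw [mul_div_assoc', le_div_iff₀ (by positivity)]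
      nlinarith
    have h4 : 0 ≤ (1 + |t|) / N := by positivity
    have h5 : 0 ≤ N / (1 + |t|) := by positivity
    nlinarith [mul_nonneg hlog (add_nonneg h4 h5)]
  push Not at ht
  have htpos : 0 < |t| := by linarith
  set q : ℝ := min (N : ℝ) ((N : ℝ) ^ 2 / |t|) with hq
  have hqpos : 0 < q := lt_min hNpos (by positivity)
  set H : ℕ := ⌈q⌉₊ with hH
  have hHN : H ≤ N := Nat.ceil_le.mpr (min_le_left _ _)
  have hHpos : 0 < H := Nat.ceil_pos.mpr hqpos
  have hqH : q ≤ H := Nat.le_ceil q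
  have hHr : (0 : ℝ) < H := by exact_mod_cast hHpos
  have hHN' : (H : ℝ) ≤ N := by exact_mod_cast hHN
  set B : ℕ → ℝ := fun k => if k = 0 then 1 else 960 * N / (|t| * k) with hB
  have hB0 : ∀ k, 0 ≤ B k := by
    intro k
    simp only [hB]
    split_ifs <;> positivity
  have key := fm_vdc (fmZ α t) N K H hHN B hB0 ?_
  · have hsum : ∑ k ∈ Finset.range H, B k ≤ 1 + 960 * N / |t| * (1 + Real.log N) := by
      obtain ⟨H', hH'⟩ : ∃ H', H = H' + 1 := ⟨H - 1, by omega⟩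
      rw [hH', Finset.sum_range_succ']
      have e1 : ∀ k, B (k + 1) = 960 * N / |t| * (1 / ((k + 1 : ℕ) : ℝ)) := by
        intro k
        simp only [hB, if_neg (Nat.succ_ne_zero k)]
        field_simp
      simp_rw [e1]
      rw [← Finset.mul_sum]
      have e2 : ∑ i ∈ Finset.range H', (1 / ((i + 1 : ℕ) : ℝ)) ≤ 1 + Real.log N := by
        have h1 : ∑ i ∈ Finset.range H', (1 / ((i + 1 : ℕ) : ℝ)) ≤ ∑ n ∈ Finset.Icc 1 N, (1 : ℝ) / n := by
          rw [← Finset.sum_image (g := fun i => i + 1) (f := fun n : ℕ => (1 : ℝ) / (n : ℝ))]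
          · refine Finset.sum_le_sum_of_subset_of_nonneg ?_ (by intros; positivity)
            intro n hn
            simp only [Finset.mem_image, Finset.mem_range] at hn
            obtain ⟨a, ha, rfl⟩ := hn
            rw [Finset.mem_Icc]
            omega
          · intro a _ b _ hab
            simpa using hab
        exact h1.trans (fm_harm_le N)
      have e3 : B 0 = 1 := by simp [hB]
      rw [e3]
      have : 960 * N / |t| * ∑ i ∈ Finset.range H', (1 / ((i + 1 : ℕ) : ℝ)) ≤ 960 * N / |t| * (1 + Real.log N) := by
        gcongr
      linarith
    set S := ‖∑ n ∈ Finset.Ico N (N + K), fmZ α t n‖ ^ 2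
    set Lg := 1 + Real.log N with hLg
    have hLg1 : 1 ≤ Lg := by linarith
    have h1 : S ≤ (4 * N / H) * (1 + 960 * N / |t| * Lg) := by
      rw [div_mul_eq_mul_div, le_div_iff₀ hHr, mul_comm S]
      refine key.trans ?_
      have h2 : (K + H : ℝ) ≤ 2 * N := by linarith
      calc (K + H : ℝ) * (2 * ∑ k ∈ Finset.range H, B k) ≤ (2 * N) * (2 * (1 + 960 * N / |t| * Lg)) := by
            have : 0 ≤ ∑ k ∈ Finset.range H, B k := Finset.sum_nonneg fun k _ => hB0 k
            gcongr
        _ = _ := by ring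
    set x := |t| / N with hx
    have hxpos : 0 < x := by positivity
    have hxinv : N / |t| = 1 / x := by rw [hx, one_div_div]
    have h3 : N / (H : ℝ) ≤ 1 + x := by
      rw [div_le_iff₀ hHr]
      refine le_trans ?_ (mul_le_mul_of_nonneg_left hqH (by positivity))
      rcases min_cases (N : ℝ) ((N : ℝ) ^ 2 / |t|) with h | h
      · rw [hq, h.1]; nlinarith
      · rw [hq, h.1]
        have : x * ((N : ℝ) ^ 2 / |t|) = N := by rw [hx]; field_simp
        have h5 : 0 ≤ (N : ℝ) ^ 2 / |t| := by positivity
        nlinarith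
    have h4 : S ≤ 4 * (1 + x) * (960 * Lg * (1 + 1 / x)) := by
      refine h1.trans ?_
      have h5 : 1 + 960 * N / |t| * Lg ≤ 960 * Lg * (1 + 1 / x) := by
        rw [← hxinv]
        have : 960 * N / |t| * Lg = 960 * Lg * (N / |t|) := by ring
        rw [this]
        nlinarith
      have h6 : 4 * N / (H : ℝ) ≤ 4 * (1 + x) := by
        rw [mul_div_assoc]; linarith
      gcongr
    have h7 : (1 + x) * (1 + 1 / x) ≤ 2 * (x + 1 / x) := by
      have e : (1 + x) * (1 + 1 / x) = 2 + x + 1 / x := by field_simp; ring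
      have e2 : 2 ≤ x + 1 / x := by
        have : x + 1 / x - 2 = (x - 1) ^ 2 / x := by field_simp; ring
        have : 0 ≤ (x - 1) ^ 2 / x := by positivity
        linarith
      linarith
    have h8 : x ≤ (1 + |t|) / N := by rw [hx]; gcongr; linarith
    have h9 : 1 / x ≤ 2 * (N / (1 + |t|)) := by
      rw [← hxinv, mul_div_assoc', div_le_div_iff₀ htpos (by positivity)]
      nlinarith
    have h10 : 0 ≤ (1 + |t|) / N := by positivity
    calc S ≤ 4 * (1 + x) * (960 * Lg * (1 + 1 / x)) := h4
      _ = 3840 * Lg * ((1 + x) * (1 + 1 / x)) := by ring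
      _ ≤ 3840 * Lg * (2 * (x + 1 / x)) := by gcongr
      _ ≤ 3840 * Lg * (2 * (2 * ((1 + |t|) / N + N / (1 + |t|)))) := by
        have : x + 1 / x ≤ 2 * ((1 + |t|) / N + N / (1 + |t|)) := by linarith
        gcongr
      _ = _ := by ring
  · intro k hk
    by_cases hk0 : k = 0
    · subst hk0
      simp only [hB, if_true, add_zero, Nat.sub_zero]
      refine (norm_sum_le _ _).trans ?_
      have : ∀ n ∈ Finset.Ico N (N + K), ‖fmZ α t n * starRingEnd ℂ (fmZ α t n)‖ ≤ 1 / N := by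
        intro n hn
        have hn' : (N : ℝ) ≤ n := by exact_mod_cast (Finset.mem_Ico.mp hn).1
        rw [norm_mul, Complex.norm_conj, fm_norm_Z, div_mul_div_comm, Real.mul_self_sqrt (by positivity),
          one_mul]
        exact one_div_le_one_div_of_le hNpos hn'
      refine (Finset.sum_le_sum this).trans ?_
      rw [Finset.sum_const, Nat.card_Ico, Nat.add_sub_cancel_left, nsmul_eq_mul, mul_one_div,
        div_le_one hNpos]
      exact hKN
    · simp only [hB, if_neg hk0]
      have hkq : (k : ℝ) < q := Nat.lt_ceil.mp hk
      refine fm_corr α t N (K - k) k hN (by omega) (by omega) (by omega) htpos ?_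
      have := hkq.trans_le (min_le_right _ _)
      rw [lt_div_iff₀ htpos] at this
      linarith

lemma fm_dyadic (α t : ℝ) (R : ℕ) (Λ : ℝ) (hΛ : 1 + Real.log R ≤ Λ) :
    ∀ (k N : ℕ), R - N ≤ k → 1 ≤ N → N ≤ R →
      ‖∑ n ∈ Finset.Ico N R, fmZ α t n‖ ≤ √(15360 * Λ) *
        (4 * √((1 + |t|) / N) + 8 * √(R / (1 + |t|)) - 4 * √(N / (1 + |t|))) := by
  have hT : 0 < 1 + |t| := by positivity
  have hblk : ∀ N K : ℕ, 1 ≤ N → K ≤ N → N ≤ R → ‖∑ n ∈ Finset.Ico N (N + K), fmZ α t n‖ ≤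
      √(15360 * Λ) * (√((1 + |t|) / N) + √(N / (1 + |t|))) := by
    intro N K hN hK hNR
    have hNpos : (0 : ℝ) < N := by exact_mod_cast hN
    have h := fm_block α t N K hN hK
    have hlog : Real.log N ≤ Real.log R := Real.log_le_log hNpos (by exact_mod_cast hNR)
    have h0 : 0 ≤ Real.log N := Real.log_natCast_nonneg N
    have hΛ0 : 0 ≤ Λ := by linarith
    have h1 : ‖∑ n ∈ Finset.Ico N (N + K), fmZ α t n‖ ≤
        √(15360 * Λ * ((1 + |t|) / N + N / (1 + |t|))) := by
      apply Real.le_sqrt_of_sq_le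
      refine h.trans ?_
      have : 1 + Real.log N ≤ Λ := by linarith
      gcongr
    refine h1.trans ?_
    rw [Real.sqrt_mul (by positivity)]
    gcongr
    rw [Real.sqrt_le_left (by positivity)]
    have e1 := Real.sq_sqrt (show 0 ≤ (1 + |t|) / N by positivity)
    have e2 := Real.sq_sqrt (show 0 ≤ N / (1 + |t|) by positivity)
    have e3 : 0 ≤ √((1 + |t|) / N) * √(N / (1 + |t|)) := by positivity
    nlinarith
  intro k
  induction k with
  | zero =>
    intro N h hN hNR
    have : N = R := by omega
    subst this
    rw [Finset.Ico_self, Finset.sum_empty, norm_zero]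
    have h1 : 0 ≤ √((1 + |t|) / N) := Real.sqrt_nonneg _
    have h2 : 0 ≤ √(N / (1 + |t|)) := Real.sqrt_nonneg _
    have : 0 ≤ 4 * √((1 + |t|) / N) + 8 * √(N / (1 + |t|)) - 4 * √(N / (1 + |t|)) := by linarith
    positivity
  | succ k ih =>
    intro N h hN hNR
    have hNpos : (0 : ℝ) < N := by exact_mod_cast hN
    have h1 : 0 ≤ √((1 + |t|) / N) := Real.sqrt_nonneg _
    have h2 : 0 ≤ √(N / (1 + |t|)) := Real.sqrt_nonneg _
    have h3 : √(N / (1 + |t|)) ≤ √(R / (1 + |t|)) := by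
      apply Real.sqrt_le_sqrt
      gcongr
    by_cases hR : R ≤ 2 * N
    · have := hblk N (R - N) hN (by omega) hNR
      rw [Nat.add_sub_cancel' hNR] at this
      refine this.trans ?_
      gcongr
      linarith
    · have hb := hblk N N hN le_rfl hNR
      have hi := ih (N + N) (by omega) (by omega) (by omega)
      rw [← Finset.sum_Ico_consecutive _ (show N ≤ N + N by omega) (show N + N ≤ R by omega)]
      refine (norm_add_le _ _).trans ((add_le_add hb hi).trans ?_)
      rw [← mul_add]
      have e1 : √((1 + |t|) / ((N + N : ℕ) : ℝ)) ≤ 0.75 * √((1 + |t|) / N) := by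
        rw [show (0.75 : ℝ) = √(0.75 ^ 2) by rw [Real.sqrt_sq (by norm_num)], ← Real.sqrt_mul (by positivity)]
        apply Real.sqrt_le_sqrt
        push_cast
        rw [show (1 + |t|) / ((N : ℝ) + N) = (1 / 2) * ((1 + |t|) / N) by field_simp; ring]
        gcongr
        norm_num
      have e2 : 1.4 * √(N / (1 + |t|)) ≤ √(((N + N : ℕ) : ℝ) / (1 + |t|)) := by
        rw [show (1.4 : ℝ) = √(1.4 ^ 2) by rw [Real.sqrt_sq (by norm_num)], ← Real.sqrt_mul (by positivity)]
        apply Real.sqrt_le_sqrt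
        push_cast
        rw [show ((N : ℝ) + N) / (1 + |t|) = 2 * (N / (1 + |t|)) by ring]
        gcongr
        norm_num
      gcongr
      linarith

lemma fm_dyadic_sq (α t : ℝ) (N R : ℕ) (Λ : ℝ) (hΛ : 1 + Real.log R ≤ Λ) (hN : 1 ≤ N) (hNR : N ≤ R) :
    ‖∑ n ∈ Finset.Ico N R, fmZ α t n‖ ^ 2 ≤ 1966080 * Λ * ((1 + |t|) / N + R / (1 + |t|)) := by
  have h := fm_dyadic α t R Λ hΛ (R - N) N le_rfl hN hNR
  have h0 : 0 ≤ Real.log R := Real.log_natCast_nonneg R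
  have hT : 0 < 1 + |t| := by positivity
  have ha := Real.sq_sqrt (show 0 ≤ (1 + |t|) / N by positivity)
  have hb := Real.sq_sqrt (show 0 ≤ R / (1 + |t|) by positivity)
  have hc := Real.sq_sqrt (show 0 ≤ 15360 * Λ by linarith)
  have h2 : 0 ≤ √(N / (1 + |t|)) := Real.sqrt_nonneg _
  have h' : ‖∑ n ∈ Finset.Ico N R, fmZ α t n‖ ≤ √(15360 * Λ) *
        (4 * √((1 + |t|) / N) + 8 * √(R / (1 + |t|))) := by
    refine h.trans ?_
    gcongr
    linarith
  set a := √((1 + |t|) / N)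
  set b := √(R / (1 + |t|))
  calc ‖∑ n ∈ Finset.Ico N R, fmZ α t n‖ ^ 2 ≤ (√(15360 * Λ) * (4 * a + 8 * b)) ^ 2 := by
        gcongr
    _ = 15360 * Λ * (4 * a + 8 * b) ^ 2 := by rw [mul_pow, hc]
    _ ≤ 15360 * Λ * (128 * (a ^ 2 + b ^ 2)) := by
        have : (0 : ℝ) ≤ 15360 * Λ := by linarith
        gcongr
        nlinarith [sq_nonneg (4 * a - 8 * b), sq_nonneg a]
    _ = _ := by rw [ha, hb]; ring

lemma fm_F (α t : ℝ) (Y R : ℕ) (Λ : ℝ) (hΛ : 1 + Real.log R ≤ Λ) (hY : 1 ≤ Y)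
    (hα0 : 0 < |α|) (hα : |α| ≤ π) :
    ‖∑ n ∈ Finset.Ico Y R, fmZ α t n‖ ^ 2 ≤ 26000000 * Λ * ((1 + |t|) / Y + 1 / |α|) ∧
    ‖∑ n ∈ Finset.Ico Y R, fmZ α t n‖ ^ 2 ≤ 312000000 * Λ * ((1 + |t|) / Y) / |α| ^ 2 := by
  have h0 : 0 ≤ Real.log R := Real.log_natCast_nonneg R
  have hΛ1 : 1 ≤ Λ := by linarith
  have hYpos : (0 : ℝ) < Y := by exact_mod_cast hY
  have hT1 : 1 ≤ 1 + |t| := by linarith [abs_nonneg t]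
  have htT : |t| ≤ 1 + |t| := by linarith
  generalize hT : 1 + |t| = T at *
  have hTpos : 0 < T := by linarith
  generalize ha : |α| = a at *
  have hpi : a ≤ 3.15 := hα.trans Real.pi_lt_d2.le
  have hM := Nat.le_ceil (2 * T / a)
  have hM2 := Nat.ceil_lt_add_one (show 0 ≤ 2 * T / a by positivity)
  generalize hMd : ⌈2 * T / a⌉₊ = M at *
  have hMpos : (0 : ℝ) < M := lt_of_lt_of_le (by positivity) hM
  have hM1 : 1 ≤ M := by exact_mod_cast hMpos
  have htail : ∀ m : ℕ, M ≤ m → ‖∑ n ∈ Finset.Ico m R, fmZ α t n‖ ^ 2 ≤ 4900 / (m * a ^ 2) := by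
    intro m hm
    have hmr : (M : ℝ) ≤ m := by exact_mod_cast hm
    have h2 : 2 * T ≤ m * a := by
      rw [← div_le_iff₀ hα0]
      linarith
    have := fm_tail α t m R (by omega) (by rw [ha]; exact hα0) (by rw [ha]; exact hα)
      (by rw [ha]; linarith)
    rw [ha] at this
    calc _ ≤ (70 / (√(m : ℝ) * a)) ^ 2 := by gcongr
      _ = _ := by rw [div_pow, mul_pow, Real.sq_sqrt (by positivity)]; norm_num
  have hMa : 2 * T ≤ M * a := by
    rw [← div_le_iff₀ hα0]
    exact hM
  by_cases hMY : M ≤ Y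
  · have h1 := htail Y hMY
    have hYr : (M : ℝ) ≤ Y := by exact_mod_cast hMY
    have hYa : 2 * T ≤ Y * a := hMa.trans (by gcongr)
    constructor
    · refine h1.trans ?_
      have : 4900 / (Y * a ^ 2) ≤ 4900 * (1 / a) := by
        rw [mul_one_div, div_le_div_iff₀ (by positivity) hα0]
        nlinarith
      refine this.trans ?_
      have h5 : 0 ≤ T / Y := by positivity
      have h6 : 0 < 1 / a := by positivity
      have h7 : T / Y + 1 / a ≤ Λ * (T / Y + 1 / a) := le_mul_of_one_le_left (by positivity) hΛ1
      nlinarith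
    · refine h1.trans ?_
      rw [show 312000000 * Λ * (T / Y) / a ^ 2 = (312000000 * Λ * T) / (Y * a ^ 2) by field_simp]
      gcongr
      nlinarith
  · push Not at hMY
    have hYM : Y < 2 * T / a := by
      rw [← hMd] at hMY
      exact Nat.lt_ceil.mp hMY
    have hYa : Y * a < 2 * T := by rwa [lt_div_iff₀ hα0] at hYM
    have hM6 : M / T ≤ 6 / a := by
      rw [div_le_div_iff₀ hTpos hα0]
      have : (M : ℝ) * a ≤ (2 * T / a + 1) * a := by gcongr
      have e : (2 * T / a + 1) * a = 2 * T + a := by field_simp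
      nlinarith
    have hF1 : ‖∑ n ∈ Finset.Ico Y R, fmZ α t n‖ ^ 2 ≤ 26000000 * Λ * (T / Y + 1 / a) := by
      have h5 : 0 ≤ T / Y := by positivity
      have h6 : 0 < 1 / a := by positivity
      have hM6' : M / T ≤ 6 * (1 / a) := by rw [mul_one_div]; exact hM6
      rcases le_or_gt R Y with hRY | hRY
      · rw [Finset.Ico_eq_empty (by omega)]
        rw [Finset.sum_empty, norm_zero, zero_pow two_ne_zero]
        have : 0 < Λ := by linarith
        positivity
      · rcases le_or_gt R M with hRM | hRM
        · have h := fm_dyadic_sq α t Y R Λ hΛ hY hRY.le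
          rw [hT] at h
          refine h.trans ?_
          have : (R : ℝ) / T ≤ 6 * (1 / a) := by
            refine le_trans ?_ hM6'
            have : (R : ℝ) ≤ M := by exact_mod_cast hRM
            gcongr
          calc 1966080 * Λ * (T / Y + R / T) ≤ 1966080 * Λ * (13 * (T / Y + 1 / a)) := by
                gcongr
                linarith
            _ = 25559040 * Λ * (T / Y + 1 / a) := by ring
            _ ≤ _ := by
                gcongr
                norm_num
        · have hlog : 1 + Real.log M ≤ Λ := by
            refine le_trans ?_ hΛ
            have : (M : ℝ) ≤ R := by exact_mod_cast hRM.le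
            have := Real.log_le_log hMpos this
            linarith
          have h := fm_dyadic_sq α t Y M Λ hlog hY hMY.le
          rw [hT] at h
          have h2 := htail M le_rfl
          have h3 : 4900 / (M * a ^ 2) ≤ 2450 * (1 / a) := by
            rw [mul_one_div, div_le_div_iff₀ (by positivity) hα0]
            nlinarith
          rw [← Finset.sum_Ico_consecutive _ hMY.le hRM.le]
          set A := ∑ n ∈ Finset.Ico Y M, fmZ α t n
          set B := ∑ n ∈ Finset.Ico M R, fmZ α t n
          have h8 : ‖A + B‖ ^ 2 ≤ 2 * ‖A‖ ^ 2 + 2 * ‖B‖ ^ 2 := by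
            have := norm_add_le A B
            have : ‖A + B‖ ^ 2 ≤ (‖A‖ + ‖B‖) ^ 2 := by gcongr
            nlinarith [sq_nonneg (‖A‖ - ‖B‖)]
          have h9 : 1966080 * Λ * (T / Y + M / T) ≤ 1966080 * Λ * (T / Y + 6 * (1 / a)) := by
            gcongr
          have h10 : 1 / a ≤ Λ * (1 / a) := le_mul_of_one_le_left (by positivity) hΛ1
          have h11 : 0 ≤ Λ * (T / Y) := by positivity
          have e : 1966080 * Λ * (T / Y + 6 * (1 / a)) =
            1966080 * (Λ * (T / Y)) + 11796480 * (Λ * (1 / a)) := by ring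
          have e2 : 26000000 * Λ * (T / Y + 1 / a) =
            26000000 * (Λ * (T / Y)) + 26000000 * (Λ * (1 / a)) := by ring
          rw [e2]
          rw [e] at h9
          linarith
    refine ⟨hF1, hF1.trans ?_⟩
    have h1 : 1 / a ≤ 2 * (T / Y) / a ^ 2 := by
      rw [mul_div_assoc', div_div, div_le_div_iff₀ hα0 (by positivity)]
      nlinarith
    have h2 : T / Y ≤ 10 * (T / Y) / a ^ 2 := by
      rw [le_div_iff₀ (by positivity)]
      have : a ^ 2 ≤ 10 := by nlinarith
      have : 0 ≤ T / Y := by positivity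
      nlinarith
    calc 26000000 * Λ * (T / Y + 1 / a) ≤ 26000000 * Λ * (10 * (T / Y) / a ^ 2 + 2 * (T / Y) / a ^ 2) := by
          gcongr
      _ = _ := by ring

lemma fmZ_mul (α t : ℝ) (n : ℕ) :
    fmZ 0 t n * cexp (((α * n : ℝ)) * I) = fmZ α t n := by
  unfold fmZ
  rw [mul_assoc, ← Complex.exp_add]
  congr 2
  push_cast
  ring

lemma fm_small (d : ℕ) [NeZero d] (t : ℝ) (N : ℕ) (T L : ℝ) (hT : 1 ≤ T) (hL : 1 ≤ L)
    (hN1 : Real.log N ≤ 2 * L) (hN2 : Real.log ((N * N : ℕ) + 1) ≤ 5 * L) (hN3 : (N : ℝ) ^ 2 ≤ 4 * d * T) :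
    ∑ χ : DirichletCharacter ℂ d, ‖∑ n ∈ Finset.Icc 1 N, fmZ 0 t n * χ n‖ ^ 4 ≤ 2430 * L ^ 5 * (d * T) := by
  refine (fm_ls4 d N (fmZ 0 t)).trans ?_
  have hn : ∀ n ∈ Finset.Icc 1 N, ‖fmZ 0 t n‖ ^ 2 = 1 / n := by
    intro n _
    rw [fm_norm_Z, div_pow, Real.sq_sqrt (by positivity), one_pow]
  have hP : ∑ n ∈ Finset.Icc 1 N, ((Nat.divisors n).card : ℝ) * ‖fmZ 0 t n‖ ^ 2 ≤ 9 * L ^ 2 := by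
    have h1 := fm_divisor_sum N
    have h2 : (1 + Real.log N) ^ 2 ≤ (3 * L) ^ 2 := by
      have := Real.log_natCast_nonneg N
      gcongr
      linarith
    calc _ = ∑ n ∈ Finset.Icc 1 N, ((Nat.divisors n).card : ℝ) / n := by
          refine Finset.sum_congr rfl fun n hn' => ?_
          rw [hn n hn']; ring
      _ ≤ _ := by nlinarith
  have hP0 : 0 ≤ ∑ n ∈ Finset.Icc 1 N, ((Nat.divisors n).card : ℝ) * ‖fmZ 0 t n‖ ^ 2 := by positivity
  have hQ : ∑ n ∈ Finset.Icc 1 N, (n : ℝ) * (((Nat.divisors n).card : ℝ) * ‖fmZ 0 t n‖ ^ 2) ≤ N * (9 * L ^ 2) := by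
    calc _ ≤ ∑ n ∈ Finset.Icc 1 N, (N : ℝ) * (((Nat.divisors n).card : ℝ) * ‖fmZ 0 t n‖ ^ 2) := by
          refine Finset.sum_le_sum fun n hn' => ?_
          have : (n : ℝ) ≤ N := by exact_mod_cast (Finset.mem_Icc.mp hn').2
          gcongr
      _ ≤ _ := by
          rw [← Finset.mul_sum]
          gcongr
  calc _ ≤ (6 * L) * (d * (9 * L ^ 2) ^ 2 + (N * (9 * L ^ 2)) ^ 2) := by
        gcongr
        linarith
    _ = 486 * L ^ 5 * (d + N ^ 2) := by ring
    _ ≤ 486 * L ^ 5 * (5 * (d * T)) := by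
        have : (d : ℝ) ≤ d * T := le_mul_of_one_le_right (by positivity) hT
        gcongr
        linarith
    _ = _ := by ring

lemma fm_dual (d : ℕ) [NeZero d] (hd : 2 ≤ d) (t : ℝ) (Y N : ℕ) (T L : ℝ) (hT : 1 + |t| = T)
    (hL : 1 ≤ L) (hN1 : 1 + Real.log N ≤ 2 * L) (hY : 1 ≤ Y) (hYT : d * T ≤ (Y : ℝ) ^ 2)
    (hdL : Real.log d ≤ L) (hdL2 : Real.log ((d * d : ℕ) + 1) ≤ 2 * L) (c : ℕ → ℂ) (ε : ℝ) (hε : |ε| = 1)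
    (hc : ∀ a, c a = 0 ∨ (2 * a ≤ d ∧ c a = ∑ n ∈ Finset.Ico Y N, fmZ (2 * π * (ε * (a / d))) t n)) :
    ∑ χ : DirichletCharacter ℂ d, ‖∑ a ∈ Finset.Icc 1 d, c a * χ⁻¹ a‖ ^ 4 ≤
      15 * 2496000000 ^ 2 * L ^ 7 * (d ^ 3 * T) := by
  have hre : ∑ χ : DirichletCharacter ℂ d, ‖∑ a ∈ Finset.Icc 1 d, c a * χ⁻¹ a‖ ^ 4 =
      ∑ χ : DirichletCharacter ℂ d, ‖∑ a ∈ Finset.Icc 1 d, c a * χ a‖ ^ 4 :=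
    Equiv.sum_comp (Equiv.inv (DirichletCharacter ℂ d)) 
      (fun χ => ‖∑ a ∈ Finset.Icc 1 d, c a * χ a‖ ^ 4)
  rw [hre]
  refine (fm_ls4 d d c).trans ?_
  have hT1 : 1 ≤ T := by rw [← hT]; linarith [abs_nonneg t]
  have hdpos : (0 : ℝ) < d := by positivity
  have hd1 : (1 : ℝ) ≤ d := by exact_mod_cast (by omega : 1 ≤ d)
  have hYpos : (0 : ℝ) < Y := by exact_mod_cast hY
  set r := T / Y with hr
  have hr0 : 0 ≤ r := by positivity
  have hrd : d * r ^ 2 ≤ T := by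
    rw [hr, div_pow, mul_div_assoc', div_le_iff₀ (by positivity)]
    nlinarith
  have hbd : ∀ a ∈ Finset.Icc 1 d, ‖c a‖ ^ 2 ≤ 52000000 * L * (r + d / a) ∧
      ‖c a‖ ^ 2 ≤ 624000000 * L * r * (d / a) ^ 2 := by
    intro a ha
    have ha1 : 1 ≤ a := (Finset.mem_Icc.mp ha).1
    have hapos : (0 : ℝ) < a := by exact_mod_cast ha1
    rcases hc a with h | ⟨h2, h⟩
    · rw [h, norm_zero, zero_pow two_ne_zero]
      constructor <;> positivity
    · have hal : |2 * π * (ε * (a / d))| = 2 * π * (a / d) := by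
        rw [abs_mul, abs_mul ε, hε, one_mul, abs_of_pos (by positivity), abs_of_pos (by positivity)]
      have h2' : (2 : ℝ) * a ≤ d := by exact_mod_cast h2
      have := fm_F (2 * π * (ε * (a / d))) t Y N (2 * L) hN1 hY (by rw [hal]; positivity) (by
        rw [hal, mul_assoc, mul_left_comm]
        have : 2 * ((a : ℝ) / d) ≤ 1 := by rw [mul_div_assoc', div_le_one hdpos]; exact h2'
        nlinarith [Real.pi_pos])
      rw [hal, hT, ← h, ← hr] at this
      have hq : (a : ℝ) / d ≤ 2 * π * (a / d) := by
        apply le_mul_of_one_le_left (by positivity)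
        linarith [Real.pi_gt_three]
      have hq0 : (0 : ℝ) < a / d := by positivity
      constructor
      · refine this.1.trans ?_
        have e : 1 / (2 * π * (a / d)) ≤ d / a := by
          rw [← one_div_div (a : ℝ) d]
          exact one_div_le_one_div_of_le hq0 hq
        rw [show 26000000 * (2 * L) = 52000000 * L by ring]
        gcongr
      · refine this.2.trans ?_
        rw [show (624000000 * L * r * (d / a : ℝ) ^ 2) = 312000000 * (2 * L) * r / (a / d) ^ 2 by field_simp; ring]
        gcongr
  have hds : ∑ n ∈ Finset.Icc 1 d, ((Nat.divisors n).card : ℝ) / n ≤ 4 * L ^ 2 := by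
    refine (fm_divisor_sum d).trans ?_
    have h0 := Real.log_natCast_nonneg d
    have : (1 + Real.log d) ^ 2 ≤ (2 * L) ^ 2 := by
      gcongr
      linarith
    nlinarith
  have hP : ∑ n ∈ Finset.Icc 1 d, ((Nat.divisors n).card : ℝ) * ‖c n‖ ^ 2 ≤
      2496000000 * L ^ 3 * (d * (r + 1)) := by
    calc _ ≤ ∑ n ∈ Finset.Icc 1 d, (52000000 * L * (d * (r + 1))) * (((Nat.divisors n).card : ℝ) / n) := by
          refine Finset.sum_le_sum fun n hn => ?_
          have hn1 : (0 : ℝ) < n := by exact_mod_cast (Finset.mem_Icc.mp hn).1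
          have hn2 : (n : ℝ) ≤ d := by exact_mod_cast (Finset.mem_Icc.mp hn).2
          have e : r + d / n ≤ d * (r + 1) / n := by
            rw [le_div_iff₀ hn1, add_mul, div_mul_cancel₀ _ hn1.ne']
            nlinarith
          calc _ ≤ ((Nat.divisors n).card : ℝ) * (52000000 * L * (d * (r + 1) / n)) := by
                have := (hbd n hn).1
                refine mul_le_mul_of_nonneg_left (this.trans ?_) (by positivity)
                gcongr
            _ = _ := by ring
      _ ≤ (52000000 * L * (d * (r + 1))) * (4 * L ^ 2) := by
          rw [← Finset.mul_sum]
          gcongr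
      _ = 208000000 * L ^ 3 * (d * (r + 1)) := by ring
      _ ≤ _ := by gcongr; norm_num
  have hQ : ∑ n ∈ Finset.Icc 1 d, (n : ℝ) * (((Nat.divisors n).card : ℝ) * ‖c n‖ ^ 2) ≤
      2496000000 * L ^ 3 * (d ^ 2 * r) := by
    calc _ ≤ ∑ n ∈ Finset.Icc 1 d, (624000000 * L * r * d ^ 2) * (((Nat.divisors n).card : ℝ) / n) := by
          refine Finset.sum_le_sum fun n hn => ?_
          have hn1 : (0 : ℝ) < n := by exact_mod_cast (Finset.mem_Icc.mp hn).1
          calc _ ≤ (n : ℝ) * (((Nat.divisors n).card : ℝ) * (624000000 * L * r * (d / n) ^ 2)) := by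
                have := (hbd n hn).2
                gcongr
            _ = _ := by field_simp
      _ ≤ (624000000 * L * r * d ^ 2) * (4 * L ^ 2) := by
          rw [← Finset.mul_sum]
          gcongr
      _ = _ := by ring
  calc _ ≤ (3 * L) * (d * (2496000000 * L ^ 3 * (d * (r + 1))) ^ 2 + (2496000000 * L ^ 3 * (d ^ 2 * r)) ^ 2) := by
        gcongr
        linarith
    _ = 3 * 2496000000 ^ 2 * L ^ 7 * (d ^ 2 * (d * (r + 1) ^ 2 + d ^ 2 * r ^ 2)) := by ring
    _ ≤ 3 * 2496000000 ^ 2 * L ^ 7 * (d ^ 2 * (5 * (d * T))) := by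
        have h1 : (r + 1) ^ 2 ≤ 2 * r ^ 2 + 2 := by nlinarith [sq_nonneg (r - 1)]
        have h2 : d * (r + 1) ^ 2 + d ^ 2 * r ^ 2 ≤ 5 * (d * T) := by
          have e1 : d * (r + 1) ^ 2 ≤ d * (2 * r ^ 2 + 2) := by gcongr
          have e2 : d * (d * r ^ 2) ≤ d * T := by gcongr
          have e3 : (d : ℝ) * 1 ≤ d * T := by gcongr
          have e4 : 1 * T ≤ d * T := by gcongr
          linarith
        gcongr
    _ = _ := by ring

lemma fm_moment (d : ℕ) [NeZero d] (hd : 2 ≤ d) (X t : ℝ) (hX : 2 ≤ X) (ht : |t| ≤ X ^ 2) (N : ℕ)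
    (hN : (N : ℝ) ≤ X) (S : Finset (DirichletCharacter ℂ d)) (hS : ∀ χ ∈ S, χ.IsPrimitive) :
    ∑ χ ∈ S, ‖∑ n ∈ Finset.Icc 1 N, fmZ 0 t n * χ n‖ ^ 4 ≤
      8 * (240 * 2496000000 ^ 2 + 2430) * (d * (1 + |t|) * Real.log (d * X) ^ 8) := by
  have hd2 : (2 : ℝ) ≤ d := by exact_mod_cast hd
  set D : ℝ := d * X with hD
  have hD4 : 4 ≤ D := by nlinarith
  set L := Real.log D with hLdef
  have hL : 1 ≤ L := by
    rw [hLdef, Real.le_log_iff_exp_le (by linarith)]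
    linarith [Real.exp_one_lt_d9]
  have hlogle : ∀ (x : ℝ) (k : ℕ), 0 ≤ x → x ≤ D ^ k → Real.log x ≤ k * L := by
    intro x k hx hxk
    rcases hx.eq_or_lt with h | h
    · rw [← h, Real.log_zero]; positivity
    · calc Real.log x ≤ Real.log (D ^ k) := Real.log_le_log h hxk
        _ = _ := by rw [Real.log_pow]
  have hdT : d * (1 + |t|) ≤ D ^ 3 := by
    have : (1 + |t|) ≤ X ^ 3 := by nlinarith
    calc d * (1 + |t|) ≤ d ^ 3 * X ^ 3 := by
          have : (d : ℝ) ≤ d ^ 3 := le_self_pow₀ (by linarith) (by norm_num)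
          gcongr
      _ = _ := by rw [hD]; ring
  have hT1 : 1 ≤ 1 + |t| := by linarith [abs_nonneg t]
  generalize hT : 1 + |t| = T at *
  set q := √(d * T) with hq
  have hqs : q ^ 2 = d * T := Real.sq_sqrt (by positivity)
  have hq1 : 1 ≤ q := by
    rw [hq, Real.one_le_sqrt]; nlinarith
  have hY1 := Nat.le_ceil q
  have hY2 := Nat.ceil_lt_add_one (show 0 ≤ q by positivity)
  generalize ⌈q⌉₊ = Y at *
  have hYpos : (0 : ℝ) < Y := by linarith
  have hYge : 1 ≤ Y := by exact_mod_cast hYpos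
  have hYT : d * T ≤ (Y : ℝ) ^ 2 := by rw [← hqs]; gcongr
  have hYT2 : (Y : ℝ) ^ 2 ≤ 4 * d * T := by nlinarith
  have hY4 : (Y : ℝ) ^ 2 ≤ D ^ 4 := by
    have : D ^ 4 = D * D ^ 3 := by ring
    have : 0 ≤ D ^ 3 := by positivity
    nlinarith
  have hYD : (Y : ℝ) ≤ D ^ 2 := by
    apply le_of_sq_le_sq _ (by positivity)
    calc _ ≤ _ := hY4
      _ = _ := by ring
  have hsm : ∀ M : ℕ, M ≤ Y → 
      ∑ χ : DirichletCharacter ℂ d, ‖∑ n ∈ Finset.Icc 1 M, fmZ 0 t n * χ n‖ ^ 4 ≤ 2430 * L ^ 5 * (d * T) := by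
    intro M hM
    have hMr : (M : ℝ) ≤ Y := by exact_mod_cast hM
    have hM2 : (M : ℝ) ^ 2 ≤ Y ^ 2 := by gcongr
    refine fm_small d t M T L hT1 hL ?_ ?_ (hM2.trans hYT2)
    · exact_mod_cast hlogle M 2 (by positivity) (by linarith)
    · refine hlogle _ 5 (by positivity) ?_
      push_cast
      have : D ^ 5 = D * D ^ 4 := by ring
      have : 1 ≤ D ^ 4 := one_le_pow₀ (by linarith)
      nlinarith
  have hsS : ∀ M : ℕ, M ≤ Y → 
      ∑ χ ∈ S, ‖∑ n ∈ Finset.Icc 1 M, fmZ 0 t n * χ n‖ ^ 4 ≤ 2430 * L ^ 5 * (d * T) := fun M hM =>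
    (Finset.sum_le_sum_of_subset_of_nonneg (Finset.subset_univ S) (fun _ _ _ => by positivity)).trans (hsm M hM)
  have hL5 : L ^ 5 ≤ L ^ 8 := pow_le_pow_right₀ hL (by norm_num)
  have hL7 : L ^ 7 ≤ L ^ 8 := pow_le_pow_right₀ hL (by norm_num)
  by_cases hNY : N < Y
  · refine (hsS N hNY.le).trans ?_
    calc 2430 * L ^ 5 * (d * T) ≤ 2430 * L ^ 8 * (d * T) := by gcongr
      _ = 2430 * (d * T * L ^ 8) := by ring
      _ ≤ _ := by gcongr; norm_num
  push Not at hNY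
  have hlarge : ∑ χ ∈ S, ‖∑ n ∈ Finset.Ico Y (N + 1), fmZ 0 t n * χ n‖ ^ 4 ≤
      240 * 2496000000 ^ 2 * L ^ 7 * (d * T) := by
    let c₁ : ℕ → ℂ := fun a => if 2 * a ≤ d then ∑ n ∈ Finset.Ico Y (N + 1), fmZ (2 * π * (1 * (a / d))) t n else 0
    let c₂ : ℕ → ℂ := fun a => if 2 * a < d then ∑ n ∈ Finset.Ico Y (N + 1), fmZ (2 * π * (-1 * (a / d))) t n else 0
    have hN1 : 1 + Real.log ((N + 1 : ℕ) : ℝ) ≤ 2 * L := by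
      have := hlogle ((N + 1 : ℕ) : ℝ) 1 (by positivity) (by push_cast; nlinarith)
      push_cast at this ⊢
      linarith
    have hdL : Real.log d ≤ L := by
      have := hlogle d 1 (by positivity) (by nlinarith)
      push_cast at this
      linarith
    have hdL2 : Real.log ((d * d : ℕ) + 1) ≤ 2 * L := by
      have := hlogle ((d * d : ℕ) + 1) 2 (by positivity) (by
        push_cast
        have : (2 * (d : ℝ)) ^ 2 ≤ D ^ 2 := by
          apply pow_le_pow_left₀ (by positivity)
          nlinarith
        nlinarith)
      exact_mod_cast this
    have hb1 := fm_dual d hd t Y (N + 1) T L hT hL hN1 hYge hYT hdL hdL2 c₁ 1 (by simp) (by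
      intro a
      by_cases h : 2 * a ≤ d
      · right; exact ⟨h, if_pos h⟩
      · left; exact if_neg h)
    have hb2 := fm_dual d hd t Y (N + 1) T L hT hL hN1 hYge hYT hdL hdL2 c₂ (-1) (by simp) (by
      intro a
      by_cases h : 2 * a < d
      · right; exact ⟨h.le, if_pos h⟩
      · left; exact if_neg h)
    have hg : ∀ χ ∈ S, (d : ℝ) ^ 2 * ‖∑ n ∈ Finset.Ico Y (N + 1), fmZ 0 t n * χ n‖ ^ 4 ≤
        8 * (‖∑ a ∈ Finset.Icc 1 d, c₁ a * χ⁻¹ a‖ ^ 4 + ‖∑ a ∈ Finset.Icc 1 d, c₂ a * χ⁻¹ a‖ ^ 4) := by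
      intro χ hχ
      refine fm_gauss d hd χ (hS χ hχ) _ _ c₁ c₂ ?_ ?_ ?_ ?_
      · intro a h
        simp only [c₁, if_pos h]
        refine Finset.sum_congr rfl fun n _ => ?_
        rw [fmZ_mul, one_mul]
      · intro a h
        exact if_neg h
      · intro a h
        simp only [c₂, if_pos h]
        refine Finset.sum_congr rfl fun n _ => ?_
        rw [fmZ_mul, neg_one_mul]
      · intro a h
        exact if_neg h
    have h1 := Finset.sum_le_sum hg
    rw [← Finset.mul_sum, ← Finset.mul_sum, Finset.sum_add_distrib] at h1
    have h2 := Finset.sum_le_sum_of_subset_of_nonneg (Finset.subset_univ S)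
      (f := fun χ => ‖∑ a ∈ Finset.Icc 1 d, c₁ a * χ⁻¹ a‖ ^ 4) (fun _ _ _ => by positivity)
    have h3 := Finset.sum_le_sum_of_subset_of_nonneg (Finset.subset_univ S)
      (f := fun χ => ‖∑ a ∈ Finset.Icc 1 d, c₂ a * χ⁻¹ a‖ ^ 4) (fun _ _ _ => by positivity)
    have hdp : (0 : ℝ) < d ^ 2 := by positivity
    refine le_of_mul_le_mul_left ?_ hdp
    calc _ ≤ _ := h1
      _ ≤ 8 * (15 * 2496000000 ^ 2 * L ^ 7 * (d ^ 3 * T) + 15 * 2496000000 ^ 2 * L ^ 7 * (d ^ 3 * T)) := by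
          gcongr
          · exact h2.trans hb1
          · exact h3.trans hb2
      _ = _ := by ring
  have hsplit : ∀ χ : DirichletCharacter ℂ d, ∑ n ∈ Finset.Icc 1 N, fmZ 0 t n * χ n =
      ∑ n ∈ Finset.Icc 1 (Y - 1), fmZ 0 t n * χ n + ∑ n ∈ Finset.Ico Y (N + 1), fmZ 0 t n * χ n := by
    intro χ
    have e1 : Finset.Icc 1 N = Finset.Ico 1 (N + 1) := by ext; rw [Finset.mem_Icc, Finset.mem_Ico]; omega
    have e2 : Finset.Icc 1 (Y - 1) = Finset.Ico 1 Y := by ext; rw [Finset.mem_Icc, Finset.mem_Ico]; omega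
    rw [e1, e2, Finset.sum_Ico_consecutive _ hYge (by omega)]
  calc ∑ χ ∈ S, ‖∑ n ∈ Finset.Icc 1 N, fmZ 0 t n * χ n‖ ^ 4
      ≤ ∑ χ ∈ S, 8 * (‖∑ n ∈ Finset.Icc 1 (Y - 1), fmZ 0 t n * χ n‖ ^ 4 +
          ‖∑ n ∈ Finset.Ico Y (N + 1), fmZ 0 t n * χ n‖ ^ 4) := by
        refine Finset.sum_le_sum fun χ _ => ?_
        rw [hsplit χ]
        have := norm_add_le (∑ n ∈ Finset.Icc 1 (Y - 1), fmZ 0 t n * χ n)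
          (∑ n ∈ Finset.Ico Y (N + 1), fmZ 0 t n * χ n)
        refine (pow_le_pow_left₀ (norm_nonneg _) this 4).trans ?_
        have := add_pow_le (norm_nonneg (∑ n ∈ Finset.Icc 1 (Y - 1), fmZ 0 t n * χ n))
          (norm_nonneg (∑ n ∈ Finset.Ico Y (N + 1), fmZ 0 t n * χ n)) 4
        norm_num at this
        exact this
    _ ≤ 8 * (2430 * L ^ 8 * (d * T) + 240 * 2496000000 ^ 2 * L ^ 8 * (d * T)) := by
        rw [← Finset.mul_sum, Finset.sum_add_distrib]
        refine mul_le_mul_of_nonneg_left (add_le_add ((hsS (Y - 1) (by omega)).trans ?_) (hlarge.trans ?_)) (by norm_num)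
        · gcongr
        · gcongr
    _ = _ := by ring

/-- Truncated Perron kernel. -/
noncomputable def fmJ (V x : ℝ) : ℂ := ∫ u in (-V)..V, cexp (x * (1 + u * I)) / (1 + u * I)

lemma fm_ne (u : ℝ) : (1 : ℂ) + u * I ≠ 0 := by
  intro h
  have := congrArg Complex.re h
  simp at this

lemma fm_norm_one_add (u : ℝ) : ‖(1 : ℂ) + u * I‖ = √(1 + u ^ 2) := by
  rw [Complex.norm_eq_sqrt_sq_add_sq]
  simp

lemma fm_norm_exp (x u : ℝ) : ‖cexp (x * (1 + u * I))‖ = Real.exp x := by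
  rw [Complex.norm_exp]
  simp

lemma fmJ_triv (V x : ℝ) (hV : 1 ≤ V) : ‖fmJ V x‖ ≤ Real.exp x * (2 * Real.log (3 * V)) := by
  unfold fmJ
  have h1 : ∫ u in (-V)..V, Real.exp x * (√(1 + u ^ 2))⁻¹ = Real.exp x * (2 * Real.arsinh V) := by
    rw [intervalIntegral.integral_const_mul, intervalIntegral.integral_eq_sub_of_hasDerivAt
      (f := Real.arsinh) (fun u _ => Real.hasDerivAt_arsinh u)]
    · rw [Real.arsinh_neg]; ring
    · apply Continuous.intervalIntegrable
      apply Continuous.inv₀ (by fun_prop)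
      intro u; positivity
  have h2 : ‖∫ u in (-V)..V, cexp (x * (1 + u * I)) / (1 + u * I)‖ ≤
      ∫ u in (-V)..V, Real.exp x * (√(1 + u ^ 2))⁻¹ := by
    apply intervalIntegral.norm_integral_le_of_norm_le (by linarith)
    · refine Filter.Eventually.of_forall fun u _ => ?_
      rw [norm_div, fm_norm_exp, fm_norm_one_add, div_eq_mul_inv]
    · apply Continuous.intervalIntegrable
      apply Continuous.mul continuous_const
      apply Continuous.inv₀ (by fun_prop)
      intro u; positivity
  rw [h1] at h2
  refine h2.trans ?_
  have : Real.arsinh V ≤ Real.log (3 * V) := by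
    unfold Real.arsinh
    apply Real.log_le_log (by positivity)
    have : √(1 + V ^ 2) ≤ 2 * V := by
      rw [Real.sqrt_le_left (by positivity)]
      nlinarith
    linarith
  gcongr

lemma fmJ_one (V : ℝ) (hV : 1 ≤ V) : ‖fmJ V 1‖ ≤ 15 := by
  have hd : ∀ u : ℝ, HasDerivAt (fun u : ℝ => cexp (((1 : ℝ) : ℂ) * (1 + u * I)) / (I * (1 + u * I)))
      (cexp (((1 : ℝ) : ℂ) * (1 + u * I)) / (1 + u * I) - cexp (((1 : ℝ) : ℂ) * (1 + u * I)) / (1 + u * I) ^ 2) u := by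
    intro u
    have h0 : HasDerivAt (fun u : ℝ => (1 : ℂ) + u * I) I u := by
      have := ((Complex.ofRealCLM.hasDerivAt (x := u)).mul_const I).const_add 1
      simpa using this
    have h1 : HasDerivAt (fun u : ℝ => cexp (((1 : ℝ) : ℂ) * (1 + u * I))) (cexp (((1 : ℝ) : ℂ) * (1 + u * I)) * (((1 : ℝ) : ℂ) * I)) u :=
      (h0.const_mul _).cexp
    have h2 := h1.div (h0.const_mul I) (mul_ne_zero I_ne_zero (fm_ne u))
    refine h2.congr_deriv ?_
    have hs := fm_ne u
    generalize cexp (((1 : ℝ) : ℂ) * (1 + u * I)) = E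
    generalize (1 : ℂ) + u * I = s at hs
    have e : E * (((1 : ℝ) : ℂ) * I) * (I * s) - E * (I * I) = -(E * s - E) := by
      push_cast
      linear_combination (E * s - E) * I_mul_I
    rw [e, mul_pow, I_sq]
    field_simp
  have hc1 : Continuous (fun u : ℝ => cexp (((1 : ℝ) : ℂ) * (1 + u * I)) / (1 + u * I)) :=
    Continuous.div (by fun_prop) (by fun_prop) fm_ne
  have hc2 : Continuous (fun u : ℝ => cexp (((1 : ℝ) : ℂ) * (1 + u * I)) / (1 + u * I) ^ 2) :=
    Continuous.div (by fun_prop) (by fun_prop) (fun u => pow_ne_zero _ (fm_ne u))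
  have h1 := intervalIntegral.integral_eq_sub_of_hasDerivAt (a := -V) (b := V) (fun u _ => hd u)
    ((hc1.sub hc2).intervalIntegrable _ _)
  rw [intervalIntegral.integral_sub (hc1.intervalIntegrable _ _) (hc2.intervalIntegrable _ _)] at h1
  have h2 : ‖∫ u in (-V)..V, cexp (((1 : ℝ) : ℂ) * (1 + u * I)) / (1 + u * I) ^ 2‖ ≤
      ∫ u in (-V)..V, Real.exp 1 * (1 + u ^ 2)⁻¹ := by
    apply intervalIntegral.norm_integral_le_of_norm_le (by linarith)
    · refine Filter.Eventually.of_forall fun u _ => ?_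
      rw [norm_div, fm_norm_exp, norm_pow, fm_norm_one_add, div_eq_mul_inv, Real.sq_sqrt (by positivity)]
    · apply Continuous.intervalIntegrable
      apply Continuous.mul continuous_const
      apply Continuous.inv₀ (by fun_prop)
      intro u; positivity
  rw [intervalIntegral.integral_const_mul, integral_inv_one_add_sq] at h2
  have h3 : ∀ u : ℝ, ‖cexp (((1 : ℝ) : ℂ) * (1 + u * I)) / (I * (1 + u * I))‖ ≤ Real.exp 1 := by
    intro u
    rw [norm_div, fm_norm_exp, norm_mul, norm_I, one_mul, fm_norm_one_add]
    apply div_le_self (Real.exp_pos _).le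
    rw [Real.one_le_sqrt]
    nlinarith
  have h4 : fmJ V 1 = (cexp (((1 : ℝ) : ℂ) * (1 + V * I)) / (I * (1 + V * I)) -
      cexp (((1 : ℝ) : ℂ) * (1 + ((-V : ℝ) : ℂ) * I)) / (I * (1 + ((-V : ℝ) : ℂ) * I))) +
      ∫ u in (-V)..V, cexp (((1 : ℝ) : ℂ) * (1 + u * I)) / (1 + u * I) ^ 2 := by
    rw [← h1]; unfold fmJ; ring
  rw [h4]
  have e := Real.exp_one_lt_d9
  have e0 := Real.exp_pos 1
  have p := Real.pi_lt_d2
  have a1 := Real.arctan_lt_pi_div_two V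
  have a2 := Real.neg_pi_div_two_lt_arctan (-V)
  have : Real.exp 1 * (Real.arctan V - Real.arctan (-V)) ≤ 2.72 * 3.15 := by
    apply mul_le_mul <;> [linarith; linarith; skip; linarith]
    rw [Real.arctan_neg]
    have : 0 ≤ Real.arctan V := Real.arctan_nonneg.mpr (by linarith)
    linarith
  calc _ ≤ (Real.exp 1 + Real.exp 1) + Real.exp 1 * (Real.arctan V - Real.arctan (-V)) := by
        refine (norm_add_le _ _).trans (add_le_add ((norm_sub_le _ _).trans (add_le_add (h3 V) (h3 (-V)))) h2)
    _ ≤ 15 := by linarith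

lemma fm_rect (f : ℂ → ℂ) (a b V A : ℝ) (hV : 0 ≤ V)
    (hf : DifferentiableOn ℂ f (Set.uIcc a b ×ℂ Set.uIcc (-V) V))
    (h1 : ‖∫ x in a..b, f (x + (-V : ℝ) * I)‖ ≤ A) (h2 : ‖∫ x in a..b, f (x + V * I)‖ ≤ A) :
    ‖(∫ u in (-V)..V, f (b + u * I)) - ∫ u in (-V)..V, f (a + u * I)‖ ≤ 2 * A := by
  have := Complex.integral_boundary_rect_eq_zero_of_differentiableOn f ⟨a, -V⟩ ⟨b, V⟩ hf
  simp only [smul_eq_mul] at this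
  set P := ∫ x in a..b, f (x + (-V : ℝ) * I)
  set Q := ∫ x in a..b, f (x + V * I)
  set B := ∫ u in (-V)..V, f (b + u * I)
  set D := ∫ u in (-V)..V, f (a + u * I)
  have e : I * (B - D) = Q - P := by linear_combination this
  have : ‖B - D‖ = ‖Q - P‖ := by rw [← e, norm_mul, norm_I, one_mul]
  rw [this]
  refine (norm_sub_le _ _).trans ?_
  linarith

lemma fm_horiz (f : ℂ → ℂ) (a b v x : ℝ) (c : ℝ) (hab : a ≤ b) (hx : x ≠ 0)
    (hf : ∀ σ : ℝ, ‖f (σ + v * I)‖ ≤ c * Real.exp (x * σ)) :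
    ‖∫ σ in a..b, f (σ + v * I)‖ ≤ c * ((Real.exp (x * b) - Real.exp (x * a)) / x) := by
  have h : ∫ σ in a..b, c * Real.exp (x * σ) = c * ((Real.exp (x * b) - Real.exp (x * a)) / x) := by
    rw [intervalIntegral.integral_const_mul, intervalIntegral.integral_eq_sub_of_hasDerivAt
      (f := fun σ => Real.exp (x * σ) / x) (fun u _ => ?_) (Continuous.intervalIntegrable (by fun_prop) _ _)]
    · ring
    · have := (((hasDerivAt_id u).const_mul x).exp).div_const x
      refine this.congr_deriv ?_
      simp only [id]
      field_simp
  rw [← h]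
  apply intervalIntegral.norm_integral_le_of_norm_le hab
  · exact Filter.Eventually.of_forall fun u _ => hf u
  · apply Continuous.intervalIntegrable
    fun_prop

lemma fmJ_neg (V x : ℝ) (hV : 1 ≤ V) (hx : x < 0) :
    ‖fmJ V x‖ ≤ 2 * (Real.exp x / (-x * V)) + 2 * Real.exp x / V := by
  have hVpos : 0 < V := by linarith
  set f : ℂ → ℂ := fun s => cexp (x * s) / s
  have hn : ∀ σ v : ℝ, ‖cexp (x * (σ + v * I))‖ = Real.exp (x * σ) := by
    intro σ v; rw [Complex.norm_exp]; simp
  have him : ∀ σ v : ℝ, |v| ≤ ‖(σ : ℂ) + v * I‖ := by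
    intro σ v; simpa using Complex.abs_im_le_norm ((σ : ℂ) + v * I)
  have hre : ∀ σ v : ℝ, |σ| ≤ ‖(σ : ℂ) + v * I‖ := by
    intro σ v; simpa using Complex.abs_re_le_norm ((σ : ℂ) + v * I)
  have hh : ∀ v : ℝ, |v| = V → ‖∫ σ in (1 : ℝ)..(V ^ 2 + 1), f (σ + v * I)‖ ≤ Real.exp x / (-x * V) := by
    intro v hv
    refine (fm_horiz f 1 (V ^ 2 + 1) v x (1 / V) (by nlinarith) hx.ne ?_).trans ?_
    · intro σ
      rw [norm_div, hn, div_eq_inv_mul, one_div]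
      gcongr
      rw [← hv]
      exact him σ v
    · rw [mul_one]
      have : (Real.exp (x * (V ^ 2 + 1)) - Real.exp x) / x ≤ Real.exp x / (-x) := by
        rw [← neg_div_neg_eq]
        have : 0 < -x := by linarith
        have := Real.exp_pos (x * (V ^ 2 + 1))
        gcongr
        linarith
      calc _ ≤ 1 / V * (Real.exp x / (-x)) := by gcongr
        _ = _ := by rw [div_mul_div_comm, one_mul, mul_comm V]
  have hr := fm_rect f 1 (V ^ 2 + 1) V _ hVpos.le (by
    intro s hs
    apply DifferentiableAt.differentiableWithinAt
    have hs0 : s ≠ 0 := by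
      rintro rfl
      have := hs.1
      simp only [Set.mem_preimage, Complex.zero_re, Set.mem_uIcc] at this
      rcases this with h | h
      · linarith [h.1]
      · nlinarith [h.1]
    simp only [f]
    fun_prop (disch := exact hs0)) (hh (-V) (by rw [abs_neg, abs_of_pos hVpos])) (hh V (abs_of_pos hVpos))
  have hR : ‖∫ u in (-V)..V, f (((V ^ 2 + 1 : ℝ) : ℂ) + u * I)‖ ≤ 2 * Real.exp x / V := by
    refine (intervalIntegral.norm_integral_le_of_norm_le_const (C := Real.exp x / V ^ 2) ?_).trans ?_
    · intro u _
      rw [norm_div, hn]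
      gcongr
      · nlinarith [sq_nonneg V]
      · have := hre (V ^ 2 + 1) u
        rw [abs_of_pos (by positivity)] at this
        linarith
    · rw [abs_of_pos (by linarith)]
      apply le_of_eq
      field_simp
      ring
  have hJ : fmJ V x = ∫ u in (-V)..V, f (((1 : ℝ) : ℂ) + u * I) := by
    unfold fmJ
    simp only [f, Complex.ofReal_one]
  rw [hJ]
  rw [norm_sub_rev] at hr
  refine (norm_le_norm_sub_add _ (∫ u in (-V)..V, f (((V ^ 2 + 1 : ℝ) : ℂ) + u * I))).trans ?_
  exact add_le_add hr hR

lemma fmJ_pos (V x : ℝ) (hV : 1 ≤ V) (hx : 0 < x) :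
    ‖fmJ V x - fmJ V 1‖ ≤ 2 * (Real.exp x / (x * V)) + 10 / V := by
  have hVpos : 0 < V := by linarith
  set h : ℂ → ℂ := fun s => cexp (x * s) - cexp ((1 : ℝ) * s)
  set f : ℂ → ℂ := dslope h 0
  have hf : ∀ s, s ≠ 0 → f s = cexp (x * s) / s - cexp ((1 : ℝ) * s) / s := by
    intro s hs
    simp only [f]
    rw [dslope_of_ne _ hs, slope_def_field]
    simp only [h]
    simp [sub_div]
  have hn : ∀ x σ v : ℝ, ‖cexp (x * (σ + v * I))‖ = Real.exp (x * σ) := by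
    intro x σ v; rw [Complex.norm_exp]; simp
  have him : ∀ σ v : ℝ, |v| ≤ ‖(σ : ℂ) + v * I‖ := by
    intro σ v; simpa using Complex.abs_im_le_norm ((σ : ℂ) + v * I)
  have hre : ∀ σ v : ℝ, |σ| ≤ ‖(σ : ℂ) + v * I‖ := by
    intro σ v; simpa using Complex.abs_re_le_norm ((σ : ℂ) + v * I)
  have h1 : ∀ x : ℝ, 0 < x → ∀ v : ℝ, |v| = V → 
      ‖∫ σ in (-V ^ 2)..1, cexp (x * (σ + v * I)) / (σ + v * I)‖ ≤ Real.exp x / (x * V) := by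
    intro x hx v hv
    refine (fm_horiz (fun s => cexp (x * s) / s) (-V ^ 2) 1 v x (1 / V) (by nlinarith) hx.ne' ?_).trans ?_
    · intro σ
      rw [norm_div, hn, div_eq_inv_mul, one_div]
      gcongr
      rw [← hv]
      exact him σ v
    · rw [mul_one]
      have : (Real.exp x - Real.exp (x * -V ^ 2)) / x ≤ Real.exp x / x := by
        have := Real.exp_pos (x * -V ^ 2)
        gcongr
        linarith
      calc _ ≤ 1 / V * (Real.exp x / x) := by gcongr
        _ = _ := by rw [div_mul_div_comm, one_mul, mul_comm V]
  have hne : ∀ σ v : ℝ, v ≠ 0 → (σ : ℂ) + v * I ≠ 0 := by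
    intro σ v hv h
    have := congrArg Complex.im h
    simp at this
    exact hv this
  have hh : ∀ v : ℝ, |v| = V → ‖∫ σ in (-V ^ 2)..1, f (σ + v * I)‖ ≤ Real.exp x / (x * V) + Real.exp 1 / (1 * V) := by
    intro v hv
    have hv0 : v ≠ 0 := by rintro rfl; simp at hv; linarith
    have hc : ∀ x : ℝ, Continuous (fun σ : ℝ => cexp (x * (σ + v * I)) / (σ + v * I)) := fun x =>
      Continuous.div (by fun_prop) (by fun_prop) (fun σ => hne σ v hv0)
    have e : ∫ σ in (-V ^ 2)..1, f (σ + v * I) = (∫ σ in (-V ^ 2)..1, cexp (x * (σ + v * I)) / (σ + v * I)) -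
        ∫ σ in (-V ^ 2)..1, cexp ((1 : ℝ) * (σ + v * I)) / (σ + v * I) := by
      rw [← intervalIntegral.integral_sub ((hc x).intervalIntegrable _ _) ((hc 1).intervalIntegrable _ _)]
      refine intervalIntegral.integral_congr fun σ _ => ?_
      exact hf _ (hne σ v hv0)
    rw [e]
    exact (norm_sub_le _ _).trans (add_le_add (h1 x hx v hv) (h1 1 one_pos v hv))
  have hdiff : Differentiable ℂ f := by
    have : DifferentiableOn ℂ f Set.univ := 
      (Complex.differentiableOn_dslope Filter.univ_mem).mpr (by
        apply Differentiable.differentiableOn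
        simp only [h]
        fun_prop)
    exact differentiableOn_univ.mp this
  have hr := fm_rect f (-V ^ 2) 1 V _ hVpos.le hdiff.differentiableOn
    (hh (-V) (by rw [abs_neg, abs_of_pos hVpos])) (hh V (abs_of_pos hVpos))
  have hR : ‖∫ u in (-V)..V, f (((-V ^ 2 : ℝ) : ℂ) + u * I)‖ ≤ 4 / V := by
    refine (intervalIntegral.norm_integral_le_of_norm_le_const (C := 2 / V ^ 2) ?_).trans ?_
    · intro u _
      have hb := hre (-V ^ 2) u
      rw [abs_neg, abs_of_pos (by positivity)] at hb
      have hs0 : ((-V ^ 2 : ℝ) : ℂ) + u * I ≠ 0 := by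
        rw [← norm_pos_iff]
        exact lt_of_lt_of_le (by positivity) hb
      have hk : ∀ x : ℝ, 0 < x → ‖cexp (x * (((-V ^ 2 : ℝ) : ℂ) + u * I)) / (((-V ^ 2 : ℝ) : ℂ) + u * I)‖ ≤ 1 / V ^ 2 := by
        intro x hx
        rw [norm_div, hn]
        gcongr
        rw [Real.exp_le_one_iff]
        nlinarith [sq_nonneg V]
      rw [hf _ hs0]
      refine (norm_sub_le _ _).trans ((add_le_add (hk x hx) (hk 1 one_pos)).trans (le_of_eq ?_))
      ring
    · rw [abs_of_pos (by linarith)]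
      apply le_of_eq
      field_simp
      ring
  have hJ : fmJ V x - fmJ V 1 = ∫ u in (-V)..V, f (((1 : ℝ) : ℂ) + u * I) := by
    unfold fmJ
    have hc : ∀ x : ℝ, Continuous (fun u : ℝ => cexp (x * (1 + u * I)) / (1 + u * I)) := fun x =>
      Continuous.div (by fun_prop) (by fun_prop) fm_ne
    rw [← intervalIntegral.integral_sub ((hc x).intervalIntegrable _ _) ((hc 1).intervalIntegrable _ _)]
    refine intervalIntegral.integral_congr fun u _ => ?_
    simp only [Complex.ofReal_one]
    rw [hf _ (fm_ne u), Complex.ofReal_one]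
  rw [hJ]
  refine (norm_le_norm_sub_add _ (∫ u in (-V)..V, f (((-V ^ 2 : ℝ) : ℂ) + u * I))).trans ?_
  refine (add_le_add hr hR).trans ?_
  have e := Real.exp_one_lt_d9
  have : Real.exp 1 / (1 * V) ≤ 3 / V := by
    rw [one_mul]; gcongr; linarith
  have : 10 / V = 2 * (3 / V) + 4 / V := by ring
  linarith

lemma fm_err (d : ℕ) (hd : 2 ≤ d) (X : ℝ) (hX : 2 ≤ X) (n : ℕ) (hn : 1 ≤ n) :
    ‖fmJ ((d * X) ^ 2) (Real.log X - Real.log n) -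
        (if n ∈ Finset.Icc 1 ⌊X⌋₊ then fmJ ((d * X) ^ 2) 1 else 0)‖ ≤
      3 / n + (if n ∈ Finset.Icc ⌊X⌋₊ (⌊X⌋₊ + 1) then 27 * Real.log (d * X) else 0) := by
  have hd2 : (2 : ℝ) ≤ d := by exact_mod_cast hd
  have hXpos : 0 < X := by linarith
  have hnpos : (0 : ℝ) < n := by exact_mod_cast hn
  have hD2 : 2 * X ≤ d * X := by gcongr
  set D : ℝ := d * X with hD
  have hD4 : 4 ≤ D := by linarith
  have hV4 : 4 * X ^ 2 ≤ D ^ 2 := by nlinarith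
  have hV1 : 1 ≤ D ^ 2 := by nlinarith
  have hL : 1 ≤ Real.log D := by
    rw [Real.le_log_iff_exp_le (by linarith)]
    linarith [Real.exp_one_lt_d9]
  have hlogV : Real.log (3 * D ^ 2) ≤ 3 * Real.log D := by
    calc Real.log (3 * D ^ 2) ≤ Real.log (D ^ 3) := by
          apply Real.log_le_log (by positivity)
          nlinarith [sq_nonneg D]
      _ = _ := by rw [Real.log_pow]; norm_num
  have hx : Real.exp (Real.log X - Real.log n) = X / n := by
    rw [Real.exp_sub, Real.exp_log hXpos, Real.exp_log hnpos]
  have hN1 := Nat.floor_le hXpos.le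
  have hN2 := Nat.lt_floor_add_one X
  have hNge : 2 ≤ ⌊X⌋₊ := Nat.le_floor (by exact_mod_cast hX)
  generalize ⌊X⌋₊ = N at *
  generalize hV : D ^ 2 = V at *
  have hVpos : 0 < V := by linarith
  have hNr : (2 : ℝ) ≤ N := by exact_mod_cast hNge
  by_cases hnear : n ∈ Finset.Icc N (N + 1)
  · rw [if_pos hnear]
    have h1 : (N : ℝ) ≤ n := by exact_mod_cast (Finset.mem_Icc.mp hnear).1
    have h2 := fmJ_triv V (Real.log X - Real.log n) hV1
    rw [hx] at h2
    have h3 : X / n ≤ 2 := by rw [div_le_iff₀ hnpos]; linarith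
    have h4 : ‖(if n ∈ Finset.Icc 1 N then fmJ V 1 else 0)‖ ≤ 15 := by
      split_ifs
      · exact fmJ_one V hV1
      · simp
    have h5 : X / n * (2 * Real.log (3 * V)) ≤ 2 * (2 * (3 * Real.log D)) := by
      have : 0 ≤ Real.log (3 * V) := Real.log_nonneg (by linarith)
      gcongr
    have h6 : 0 < 3 / (n : ℝ) := by positivity
    refine (norm_sub_le _ _).trans ?_
    linarith
  · rw [if_neg hnear, add_zero]
    rw [Finset.mem_Icc] at hnear
    rcases lt_or_ge n N with h | h
    · rw [if_pos (Finset.mem_Icc.mpr ⟨hn, h.le⟩)]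
      have hnX : (n : ℝ) + 1 ≤ X := by
        have : (n : ℝ) + 1 ≤ N := by exact_mod_cast h
        linarith
      have hlog : 1 / X ≤ Real.log X - Real.log n := by
        rw [← Real.log_div hXpos.ne' hnpos.ne']
        refine le_trans ?_ (Real.one_sub_inv_le_log_of_pos (by positivity))
        rw [inv_div, le_sub_iff_add_le, ← add_div, div_le_one hXpos]
        linarith
      have hxp : 0 < Real.log X - Real.log n := lt_of_lt_of_le (by positivity) hlog
      refine (fmJ_pos V _ hV1 hxp).trans ?_
      rw [hx]
      have e1 : X / n / ((Real.log X - Real.log n) * V) ≤ X / n / (1 / X * (4 * X ^ 2)) := by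
        gcongr
      have e2 : X / n / (1 / X * (4 * X ^ 2)) = (1 / 4) / n := by field_simp
      have e3 : 10 / V ≤ (5 / 2) / n := by
        rw [div_le_div_iff₀ hVpos hnpos]
        nlinarith
      have e4 : (3 : ℝ) / n = 2 * ((1 / 4) / n) + (5 / 2) / n := by ring
      rw [e4, ← e2]
      linarith
    · have h' : N + 2 ≤ n := by
        by_contra h3
        exact hnear ⟨h, by omega⟩
      rw [if_neg (by rw [Finset.mem_Icc]; omega), sub_zero]
      have hnX : X + 1 ≤ n := by
        have : (N : ℝ) + 2 ≤ n := by exact_mod_cast h'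
        linarith
      have hlog : 1 / (2 * X) ≤ -(Real.log X - Real.log n) := by
        rw [neg_sub, ← Real.log_div hnpos.ne' hXpos.ne']
        refine le_trans ?_ (Real.one_sub_inv_le_log_of_pos (by positivity))
        rw [inv_div]
        have : X / n ≤ X / (X + 1) := by gcongr
        have e : 1 - X / (X + 1) = 1 / (X + 1) := by field_simp; ring
        have : 1 / (2 * X) ≤ 1 / (X + 1) := by
          apply one_div_le_one_div_of_le <;> linarith
        linarith
      have hxn : Real.log X - Real.log n < 0 := by
        have : 0 < 1 / (2 * X) := by positivity
        linarith
      refine (fmJ_neg V _ hV1 hxn).trans ?_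
      rw [hx]
      have e1 : X / n / (-(Real.log X - Real.log n) * V) ≤ X / n / (1 / (2 * X) * (4 * X ^ 2)) := by
        have : 0 ≤ -(Real.log X - Real.log n) := by linarith
        gcongr
      have e2 : X / n / (1 / (2 * X) * (4 * X ^ 2)) = (1 / 2) / n := by field_simp; norm_num
      have e3 : 2 * (X / n) / V ≤ 1 / n := by
        rw [mul_div_assoc', div_div, div_le_div_iff₀ (by positivity) hnpos, one_mul, mul_comm (n : ℝ) V]
        gcongr
        nlinarith
      have e4 : (3 : ℝ) / n = 2 * ((1 / 2) / n) + 1 / n + 1 / n := by ring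
      have : 0 < 1 / (n : ℝ) := by positivity
      rw [e4, ← e2]
      linarith

lemma fm_summable : Summable (fun n : ℕ => 1 / ((n : ℝ) * √n)) := by
  have := (Real.summable_one_div_nat_rpow (p := 3 / 2)).mpr (by norm_num)
  refine this.congr fun n => ?_
  rcases Nat.eq_zero_or_pos n with h | h
  · subst h; simp
  · have hn : (0 : ℝ) < n := by exact_mod_cast h
    rw [show (3 / 2 : ℝ) = 1 + 1 / 2 by norm_num, Real.rpow_add hn, Real.rpow_one, Real.sqrt_eq_rpow]

lemma fm_term (d : ℕ) (χ : DirichletCharacter ℂ d) (X t u : ℝ) (hX : 0 < X) (n : ℕ) :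
    LSeries.term (fun n => χ n) (3 / 2 + I * t + I * u) n * (X : ℂ) ^ ((1 : ℂ) + I * u) / (1 + I * u) * I =
      I * (fmZ 0 t n * χ n) * (cexp ((Real.log X - Real.log n : ℝ) * (1 + u * I)) / (1 + u * I)) := by
  rcases Nat.eq_zero_or_pos n with h | h
  · subst h
    simp [fmZ]
  · have hn : (0 : ℝ) < n := by exact_mod_cast h
    have hnc : (n : ℂ) ≠ 0 := by exact_mod_cast h.ne'
    have hXc : (X : ℂ) ≠ 0 := by exact_mod_cast hX.ne'
    rw [LSeries.term_of_ne_zero h.ne', Complex.cpow_def_of_ne_zero hnc, Complex.cpow_def_of_ne_zero hXc,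
      ← Complex.ofReal_log hX.le, ← Complex.natCast_log, div_eq_mul_inv (χ n : ℂ), ← Complex.exp_neg]
    have hs : 1 / √(n : ℝ) = Real.exp (-(Real.log n / 2)) := by
      rw [Real.exp_neg, one_div, Real.sqrt_eq_rpow, Real.rpow_def_of_pos hn]
      congr 3
      ring
    unfold fmZ
    rw [hs, Complex.ofReal_exp]
    have e : cexp (-((Real.log n : ℂ) * (3 / 2 + I * t + I * u))) * cexp ((Real.log X : ℂ) * (1 + I * u)) =
        cexp ((-(Real.log n / 2) : ℝ) : ℂ) * cexp ((0 * (n : ℝ) - t * Real.log n : ℝ) * I) *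
        cexp ((Real.log X - Real.log n : ℝ) * (1 + u * I)) := by
      rw [← Complex.exp_add, ← Complex.exp_add, ← Complex.exp_add]
      congr 1
      push_cast
      ring
    rw [mul_comm I (u : ℂ)] at *
    linear_combination (χ n * (1 + u * I)⁻¹ * I) * e

lemma fm_perron (d : ℕ) [NeZero d] (hd : 2 ≤ d) (χ : DirichletCharacter ℂ d) (X t : ℝ) (hX : 2 ≤ X) :
    ‖∫ u in (-((d * X : ℝ) ^ 2))..((d * X : ℝ) ^ 2),
      (DirichletCharacter.LFunction χ (3 / 2 + I * t + I * u)) *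
        (X : ℂ) ^ ((1 : ℂ) + I * u) / (1 + I * u) * I‖ ≤
      15 * ‖∑ n ∈ Finset.Icc 1 ⌊X⌋₊, fmZ 0 t n * χ n‖ +
        (3 * (∑' n : ℕ, 1 / ((n : ℝ) * √n)) + 54) * Real.log (d * X) := by
  have hd2 : (2 : ℝ) ≤ d := by exact_mod_cast hd
  have hXpos : 0 < X := by linarith
  have hD4 : 4 ≤ (d : ℝ) * X := by nlinarith
  have hV1 : 1 ≤ ((d : ℝ) * X) ^ 2 := by nlinarith
  have hL : 1 ≤ Real.log (d * X) := by
    rw [Real.le_log_iff_exp_le (by linarith)]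
    linarith [Real.exp_one_lt_d9]
  have herr := fm_err d hd X hX
  generalize ((d : ℝ) * X) ^ 2 = V at *
  have hzn : ∀ n : ℕ, ‖I * (fmZ 0 t n * χ n)‖ ≤ 1 / √(n : ℝ) := by
    intro n
    rw [norm_mul, norm_I, one_mul, norm_mul, fm_norm_Z]
    exact mul_le_of_le_one_right (by positivity) (χ.norm_le_one _)
  have hsum : HasSum (fun n : ℕ => I * (fmZ 0 t n * χ n) * fmJ V (Real.log X - Real.log n))
      (∫ u in (-V)..V, (DirichletCharacter.LFunction χ (3 / 2 + I * t + I * u)) *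
        (X : ℂ) ^ ((1 : ℂ) + I * u) / (1 + I * u) * I) := by
    have h := intervalIntegral.hasSum_integral_of_dominated_convergence (μ := volume) (a := -V) (b := V)
      (F := fun (n : ℕ) (u : ℝ) => I * (fmZ 0 t n * χ n) * (cexp ((Real.log X - Real.log n : ℝ) * (1 + u * I)) / (1 + u * I)))
      (f := fun u : ℝ => (DirichletCharacter.LFunction χ (3 / 2 + I * t + I * u)) *
        (X : ℂ) ^ ((1 : ℂ) + I * u) / (1 + I * u) * I)
      (fun n _ => X * (1 / ((n : ℝ) * √n))) ?_ ?_ ?_ ?_ ?_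
    · simp only [intervalIntegral.integral_const_mul] at h
      exact h
    · intro n
      apply Continuous.aestronglyMeasurable
      exact continuous_const.mul (Continuous.div (by fun_prop) (by fun_prop) fm_ne)
    · intro n
      refine Filter.Eventually.of_forall fun u _ => ?_
      rcases Nat.eq_zero_or_pos n with h | h
      · subst h
        simp [fmZ]
      · have hn : (0 : ℝ) < n := by exact_mod_cast h
        rw [norm_mul, norm_div, fm_norm_exp, Real.exp_sub, Real.exp_log hXpos, Real.exp_log hn]
        have h1 : 1 ≤ ‖(1 : ℂ) + u * I‖ := by
          rw [fm_norm_one_add, Real.one_le_sqrt]; nlinarith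
        calc _ ≤ 1 / √(n : ℝ) * (X / n) := by
              refine mul_le_mul (hzn n) (div_le_self (by positivity) h1) (by positivity) (by positivity)
          _ = _ := by field_simp
    · exact Filter.Eventually.of_forall fun u _ => fm_summable.mul_left X
    · exact intervalIntegrable_const
    · refine Filter.Eventually.of_forall fun u _ => ?_
      have hre : 1 < (3 / 2 + I * t + I * u : ℂ).re := by
        simp
        norm_num
      have h1 := (χ.LSeriesSummable_of_one_lt_re hre).hasSum
      rw [← LSeries, ← DirichletCharacter.LFunction_eq_LSeries χ hre] at h1
      have h2 := ((h1.mul_right ((X : ℂ) ^ ((1 : ℂ) + I * u))).div_const (1 + I * u)).mul_right I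
      simp only [fm_term d χ X t u hXpos] at h2
      exact h2
  set N := ⌊X⌋₊
  have hfin : HasSum (fun n : ℕ => I * (fmZ 0 t n * χ n) * (if n ∈ Finset.Icc 1 N then fmJ V 1 else 0))
      (I * (∑ n ∈ Finset.Icc 1 N, fmZ 0 t n * χ n) * fmJ V 1) := by
    have := hasSum_sum_of_ne_finset_zero (L := SummationFilter.unconditional ℕ) (s := Finset.Icc 1 N)
      (f := fun n : ℕ => I * (fmZ 0 t n * χ n) * (if n ∈ Finset.Icc 1 N then fmJ V 1 else 0))
      (fun n hn => by simp only [if_neg hn, mul_zero])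
    convert this using 1
    rw [Finset.mul_sum, Finset.sum_mul]
    exact Finset.sum_congr rfl fun n hn => by rw [if_pos hn]
  have hg : HasSum (fun n : ℕ => 3 * (1 / ((n : ℝ) * √n)) + (if n ∈ Finset.Icc N (N + 1) then 27 * Real.log (d * X) else 0))
      ((3 * (∑' n : ℕ, 1 / ((n : ℝ) * √n)) + 54 * Real.log (d * X))) := by
    refine (fm_summable.hasSum.mul_left 3).add ?_
    have := hasSum_sum_of_ne_finset_zero (L := SummationFilter.unconditional ℕ) (s := Finset.Icc N (N + 1))
      (f := fun n : ℕ => if n ∈ Finset.Icc N (N + 1) then 27 * Real.log (d * X) else 0)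
      (fun n hn => by simp only [if_neg hn])
    rw [Finset.sum_ite_mem, Finset.inter_self, Finset.sum_const, Nat.card_Icc,
      show N + 1 + 1 - N = 2 by omega, nsmul_eq_mul, ← mul_assoc,
      show ((2 : ℕ) : ℝ) * 27 = 54 by norm_num] at this
    exact this
  have hdiff := (hsum.sub hfin).norm_le_of_bounded hg (by
    intro n
    rcases Nat.eq_zero_or_pos n with h | h
    · subst h
      simp only [fmZ]
      simp
      split_ifs <;> positivity
    · have hn : (1 : ℝ) ≤ n := by exact_mod_cast h
      rw [← mul_sub, norm_mul]
      have hs1 : 1 / √(n : ℝ) ≤ 1 := by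
        rw [div_le_one (by positivity), Real.one_le_sqrt]
        exact hn
      refine (mul_le_mul (hzn n) (herr n h) (norm_nonneg _) (by positivity)).trans ?_
      rw [mul_add]
      refine add_le_add (le_of_eq (by field_simp)) ?_
      apply mul_le_of_le_one_left _ hs1
      split_ifs <;> positivity)
  have hm : ‖I * (∑ n ∈ Finset.Icc 1 N, fmZ 0 t n * χ n) * fmJ V 1‖ ≤ 15 * ‖∑ n ∈ Finset.Icc 1 N, fmZ 0 t n * χ n‖ := by
    rw [norm_mul, norm_mul, norm_I, one_mul, mul_comm]
    gcongr
    exact fmJ_one V hV1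
  refine (norm_le_norm_sub_add _ (I * (∑ n ∈ Finset.Icc 1 N, fmZ 0 t n * χ n) * fmJ V 1)).trans ?_
  have hz : 0 ≤ ∑' n : ℕ, 1 / ((n : ℝ) * √n) := tsum_nonneg fun n => by positivity
  have : 3 * (∑' n : ℕ, 1 / ((n : ℝ) * √n)) ≤ 3 * (∑' n : ℕ, 1 / ((n : ℝ) * √n)) * Real.log (d * X) :=
    le_mul_of_one_le_right (by positivity) hL
  linarith

/-- Fourth moment bound for the truncated Perron integral of `L'(s+1/2+it,χ) X^s / s` along the
vertical segment from `1 - iV` to `1 + iV` with `V = (dX)²`: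
`Σ*_{χ mod d} |∫_{-V}^{V} L(3/2+it+iu, χ) X^{1+iu}/(1+iu) i du|⁴ ≤ C d (1+|t|) (log dX)⁸`. -/
theorem fourth_moment_perron_integral :
    ∃ C : ℝ, ∀ (d : ℕ) (hd : 2 ≤ d), ∀ X : ℝ, 2 ≤ X → ∀ t : ℝ, |t| ≤ X ^ 2 →
      sumPrimitive d (fun χ =>
        ‖∫ u in (-((d * X : ℝ) ^ 2))..((d * X : ℝ) ^ 2),
            (@DirichletCharacter.LFunction d ⟨by omega⟩ χ
                (3 / 2 + Complex.I * t + Complex.I * u)) *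
              (X : ℂ) ^ ((1 : ℂ) + Complex.I * u) / (1 + Complex.I * u) * Complex.I‖ ^ 4)
        ≤ C * d * (1 + |t|) * Real.log (d * X) ^ 8 := by
  set A : ℝ := 3 * (∑' n : ℕ, 1 / ((n : ℝ) * √n)) + 54 with hA
  have hA0 : 0 ≤ A := by
    have hz : 0 ≤ ∑' n : ℕ, 1 / ((n : ℝ) * √n) := tsum_nonneg fun n => by positivity
    linarith
  refine ⟨8 * (15 ^ 4 * (8 * (240 * 2496000000 ^ 2 + 2430)) + A ^ 4), ?_⟩
  intro d hd X hX t ht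
  have : NeZero d := ⟨by omega⟩
  have hfin : {χ : DirichletCharacter ℂ d | χ.IsPrimitive}.Finite := Set.toFinite _
  unfold sumPrimitive
  rw [finsum_mem_eq_finite_toFinset_sum _ hfin]
  set S := hfin.toFinset
  have hS : ∀ χ ∈ S, χ.IsPrimitive := fun χ hχ => by simpa [S] using hχ
  have hXpos : 0 < X := by linarith
  have hm := fm_moment d hd X t hX ht ⌊X⌋₊ (Nat.floor_le hXpos.le) S hS
  have hd2 : (2 : ℝ) ≤ d := by exact_mod_cast hd
  have hD4 : 4 ≤ (d : ℝ) * X := by nlinarith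
  have hL : 1 ≤ Real.log (d * X) := by
    rw [Real.le_log_iff_exp_le (by linarith)]
    linarith [Real.exp_one_lt_d9]
  have hcard : (S.card : ℝ) ≤ d := by
    have h1 : S.card ≤ Fintype.card (DirichletCharacter ℂ d) := Finset.card_le_univ S
    have h2 := DirichletCharacter.card_eq_totient_of_hasEnoughRootsOfUnity ℂ d
    rw [Nat.card_eq_fintype_card] at h2
    have h3 := Nat.totient_le d
    exact_mod_cast (by omega : S.card ≤ d)
  set L := Real.log (d * X)
  set K : ℝ := 8 * (240 * 2496000000 ^ 2 + 2430) with hK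
  calc _ ≤ ∑ χ ∈ S, 8 * (15 ^ 4 * ‖∑ n ∈ Finset.Icc 1 ⌊X⌋₊, fmZ 0 t n * χ n‖ ^ 4 + (A * L) ^ 4) := by
        refine Finset.sum_le_sum fun χ _ => ?_
        have h1 := fm_perron d hd χ X t hX
        refine (pow_le_pow_left₀ (norm_nonneg _) h1 4).trans ?_
        have := add_pow_le (show 0 ≤ 15 * ‖∑ n ∈ Finset.Icc 1 ⌊X⌋₊, fmZ 0 t n * χ n‖ by positivity)
          (show 0 ≤ A * L by positivity) 4
        rw [mul_pow 15] at this
        refine this.trans (le_of_eq ?_)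
        norm_num
    _ = 8 * (15 ^ 4 * ∑ χ ∈ S, ‖∑ n ∈ Finset.Icc 1 ⌊X⌋₊, fmZ 0 t n * χ n‖ ^ 4 + S.card * (A * L) ^ 4) := by
        rw [← Finset.mul_sum, Finset.sum_add_distrib, ← Finset.mul_sum, Finset.sum_const, nsmul_eq_mul]
    _ ≤ 8 * (15 ^ 4 * (K * (d * (1 + |t|) * L ^ 8)) + A ^ 4 * (d * (1 + |t|) * L ^ 8)) := by
        have h1 : S.card * (A * L) ^ 4 ≤ A ^ 4 * (d * (1 + |t|) * L ^ 8) := by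
          have e1 : L ^ 4 ≤ L ^ 8 := pow_le_pow_right₀ hL (by norm_num)
          have e2 : (S.card : ℝ) ≤ d * (1 + |t|) := by nlinarith [abs_nonneg t]
          calc S.card * (A * L) ^ 4 = A ^ 4 * (S.card * L ^ 4) := by ring
            _ ≤ _ := by gcongr
        gcongr
    _ = _ := by ring
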